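/- arXiv:2206.11735 — 2 statements merged into one kernel-verified Lean document; each statement's English description precedes it below -/
import Mathlib

section
/- Let (A, B) be a controllable pair of constant matrices with A ∈ ℝ^{n×n} and B ∈ ℝ^{n×p}, and let Σ₀, Σ₁ be symmetric positive definite n×n matrices. Let M, ν be of class C^{max(n−2,0)} on [0,1] with M(t) symmetric positive semidefinite and ν(t) ≥ 0 on [0,1]. Then there exists a continuous K : [0,1] → ℝ^{p×n} such that the solution of the matrix differential equation Σ'(t) = (A + BK(t))Σ + Σ(A + BK(t))ᵀ + M(t) + 2ν(t)Σ with Σ(0) = Σ₀ satisfies Σ(t) ≻ 0 (symmetric positive definite) for all t ∈ [0,1] and Σ(1) = Σ₁. -/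
open Matrix

/-- The controllability matrix `[B AB A²B ⋯ A^{n−1}B]` of a constant pair `(A, B)`. -/
def ctrbConstMat {n p : ℕ} (A : Matrix (Fin n) (Fin n) ℝ) (B : Matrix (Fin n) (Fin p) ℝ) :
    Matrix (Fin n) (Fin n × Fin p) ℝ :=
  Matrix.of fun i kj => (A ^ (kj.1 : ℕ) * B) i kj.2

/-!
As long as `S` is invertible, choosing the gain `K` amounts to choosing `U = K S`, in which the
equation is affine. A change of variables by the fundamental matrix of `x' = (A + ν I) x` removes
the drift and leaves `Z' = b u + (b u)ᵀ + Q`, where controllability says that no nonzero row vector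
annihilates `b` on a nonempty open time interval.

If `P' = b v` with `P = 0` up to a time `c`, `P` invertible afterwards and `P = 1` at the end, then
`(1 - P) R₀' (1 - P)ᵀ + P R₁' Pᵀ + ∫_c^t Q` is a positive definite solution. Here `R₀'` is the
initial value plus the noise accumulated up to `c`, and `R₁'` the target minus the noise still to
come, which is positive definite once `c` is close enough to the end. A ratio of Gramians provides
`P`; weighting them by the ramp `max 0 (s - c)` makes `v`, hence `K`, continuous across `c`.
-/

open Filter Set Topology

namespace CovarianceSteering

variable {m k : Type*}

theorem transpose_eq_of_isHermitian {N : Matrix m m ℝ} (hN : N.IsHermitian) : Nᵀ = N :=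
  isHermitian_iff_isSymm.1 hN

theorem hasDerivWithinAt_matrix [Finite m] [Finite k] {S : ℝ → Matrix m k ℝ} {S' : Matrix m k ℝ}
    {s : Set ℝ} {t : ℝ} :
    HasDerivWithinAt S S' s t ↔ ∀ i j, HasDerivWithinAt (fun τ => S τ i j) (S' i j) s t := by
  cases nonempty_fintype m
  cases nonempty_fintype k
  exact hasDerivWithinAt_pi.trans (forall_congr' fun _ => hasDerivWithinAt_pi)

open scoped Matrix.Norms.Operator in
theorem hasDerivAt_transpose [Finite m] [Finite k] {f : ℝ → Matrix m k ℝ} {f' : Matrix m k ℝ}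
    {t : ℝ} (hf : HasDerivAt f f' t) : HasDerivAt (fun s => (f s)ᵀ) f'ᵀ t := by
  cases nonempty_fintype m
  cases nonempty_fintype k
  exact (transposeLinearEquiv m k ℝ ℝ).toLinearMap.toContinuousLinearMap.hasFDerivAt.comp_hasDerivAt
    t hf

section PositiveDefinite

variable {N : Matrix m m ℝ}

theorem posSemidef_mul_mul_transpose [Fintype m] (hN : N.PosSemidef) (U : Matrix m m ℝ) :
    (U * N * Uᵀ).PosSemidef := by
  simpa only [conjTranspose_eq_transpose_of_trivial] using hN.mul_mul_conjTranspose_same U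

theorem posDef_mul_mul_transpose [Fintype m] [DecidableEq m] (hN : N.PosDef) {U : Matrix m m ℝ}
    (hU : IsUnit U) : (U * N * Uᵀ).PosDef := by
  simpa only [conjTranspose_eq_transpose_of_trivial] using
    hN.mul_mul_conjTranspose_same (vecMul_injective_of_isUnit hU)

theorem posDef_of_forall_mem_sphere [Fintype m] (hN : N.IsHermitian)
    (hpos : ∀ x ∈ Metric.sphere (0 : m → ℝ) 1, 0 < x ⬝ᵥ N *ᵥ x) : N.PosDef := by
  refine .of_dotProduct_mulVec_pos hN fun x hx => ?_
  have hnorm : 0 < ‖x‖ := norm_pos_iff.2 hx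
  have hunit := hpos (‖x‖⁻¹ • x) (by simp [norm_smul, hnorm.ne'])
  simp only [mulVec_smul, smul_dotProduct, dotProduct_smul, smul_eq_mul] at hunit
  have hinv : 0 < ‖x‖⁻¹ := inv_pos.2 hnorm
  exact pos_of_mul_pos_right (pos_of_mul_pos_right hunit hinv.le) hinv.le

theorem eventually_nhds_posDef_of_isHermitian [Finite m] (hN : N.PosDef) :
    ∀ᶠ N' in 𝓝 N, N'.IsHermitian → N'.PosDef := by
  cases nonempty_fintype m
  have hcont : Continuous fun z : Matrix m m ℝ × (m → ℝ) => z.2 ⬝ᵥ z.1 *ᵥ z.2 := by fun_prop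
  have hsphere : ∀ᶠ N' in 𝓝 N, ∀ x ∈ Metric.sphere (0 : m → ℝ) 1, 0 < x ⬝ᵥ N' *ᵥ x := by
    refine (isCompact_sphere _ _).eventually_forall_of_forall_eventually fun x hx => ?_
    refine hcont.continuousAt.eventually (lt_mem_nhds ?_)
    exact hN.dotProduct_mulVec_pos (ne_zero_of_mem_unit_sphere ⟨x, hx⟩)
  filter_upwards [hsphere] with N' hpos hN'
  exact posDef_of_forall_mem_sphere hN' hpos

theorem continuousOn_matrix_inv [Fintype m] [DecidableEq m] {α : Type*} [TopologicalSpace α]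
    {f : α → Matrix m m ℝ} {s : Set α} (hf : ContinuousOn f s) (hu : ∀ t ∈ s, IsUnit (f t)) :
    ContinuousOn (fun t => (f t)⁻¹) s := fun t ht =>
  (continuousAt_matrix_inv _ (by
    simpa only [Ring.inverse_eq_inv'] using
      continuousAt_inv₀ ((isUnit_iff_isUnit_det _).1 (hu t ht)).ne_zero)).comp_continuousWithinAt
    (hf t ht)

end PositiveDefinite

variable [Fintype m]

/-- `S` solves the differential Lyapunov equation `S' = L S + S Lᵀ + M` on the set `s` of times.
Derivatives are taken within `s`, hence are one-sided at the endpoints of a closed interval. A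
scalar growth term `2 ν S` is encoded by adding `ν • 1` to `L`. -/
def SolvesLyapunovOn (L M S : ℝ → Matrix m m ℝ) (s : Set ℝ) : Prop :=
  ∀ t ∈ s, HasDerivWithinAt S (L t * S t + S t * (L t)ᵀ + M t) s t

theorem solvesLyapunovOn_add_smul_one_iff [DecidableEq m] {L M S : ℝ → Matrix m m ℝ} {ν : ℝ → ℝ}
    {s : Set ℝ} :
    SolvesLyapunovOn (fun t => L t + ν t • 1) M S s ↔ ∀ t ∈ s, ∀ i j,
      HasDerivWithinAt (fun τ => S τ i j)
        ((L t * S t + S t * (L t)ᵀ + M t + (2 * ν t) • S t) i j) s t := by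
  refine forall₂_congr fun t _ => ?_
  rw [← hasDerivWithinAt_matrix]
  have hfield : (L t + ν t • 1) * S t + S t * (L t + ν t • 1)ᵀ + M t =
      L t * S t + S t * (L t)ᵀ + M t + (2 * ν t) • S t := by
    simp only [Matrix.add_mul, Matrix.mul_add, transpose_add, transpose_smul, transpose_one,
      Matrix.smul_mul, Matrix.mul_smul, Matrix.one_mul, Matrix.mul_one, two_mul, add_smul]
    abel
  rw [hfield]

open scoped Matrix.Norms.Operator

section Calculus

theorem hasDerivAt_mul_mul_transpose {f : ℝ → Matrix m m ℝ} {f' N : Matrix m m ℝ}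
    {t : ℝ} (hf : HasDerivAt f f' t) (hN : N.IsHermitian) :
    HasDerivAt (fun s => f s * N * (f s)ᵀ) (f' * N * (f t)ᵀ + (f' * N * (f t)ᵀ)ᵀ) t := by
  classical
  refine ((hf.mul_const N).mul (hasDerivAt_transpose hf)).congr_deriv ?_
  simp only [transpose_mul, transpose_transpose, transpose_eq_of_isHermitian hN, Matrix.mul_assoc]

theorem hasDerivAt_fundamental_conj {A Z' : Matrix m m ℝ} {Φ Z : ℝ → Matrix m m ℝ} {t : ℝ}
    (hΦ : HasDerivAt Φ (A * Φ t) t) (hZ : HasDerivAt Z Z' t) :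
    HasDerivAt (fun s => Φ s * Z s * (Φ s)ᵀ)
      (A * (Φ t * Z t * (Φ t)ᵀ) + Φ t * Z t * (Φ t)ᵀ * Aᵀ + Φ t * Z' * (Φ t)ᵀ) t := by
  classical
  refine ((hΦ.mul hZ).mul (hasDerivAt_transpose hΦ)).congr_deriv ?_
  simp only [transpose_mul, Matrix.add_mul, Matrix.mul_assoc, Pi.mul_apply]
  abel

variable {f : ℝ → Matrix m m ℝ} {a b : ℝ}

theorem hasDerivAt_vecMul_mul [Finite k] {f' : Matrix m m ℝ} {t : ℝ} (x : m → ℝ)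
    (C : Matrix m k ℝ) (hf : HasDerivAt f f' t) :
    HasDerivAt (fun s => x ᵥ* (f s * C)) (x ᵥ* (f' * C)) t := by
  cases nonempty_fintype k
  exact (vecMulBilin ℝ ℝ x ∘ₗ
    mulRightLinearMap m ℝ C).toContinuousLinearMap.hasFDerivAt.comp_hasDerivAt t hf

theorem transpose_intervalIntegral (hf : ContinuousOn f (uIcc a b)) :
    (∫ s in a..b, f s)ᵀ = ∫ s in a..b, (f s)ᵀ :=
  ((transposeLinearEquiv m m ℝ ℝ).toLinearMap.toContinuousLinearMap.intervalIntegral_comp_comm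
    hf.intervalIntegrable).symm

theorem dotProduct_intervalIntegral_mulVec (hf : ContinuousOn f (uIcc a b)) (x y : m → ℝ) :
    x ⬝ᵥ (∫ s in a..b, f s) *ᵥ y = ∫ s in a..b, x ⬝ᵥ f s *ᵥ y :=
  ((dotProductBilin ℝ ℝ x ∘ₗ
    (mulVecBilin ℝ ℝ).flip y).toContinuousLinearMap.intervalIntegral_comp_comm
      hf.intervalIntegrable).symm

theorem posSemidef_intervalIntegral (hf : ContinuousOn f (Icc a b)) (hab : a ≤ b)
    (hpos : ∀ s ∈ Icc a b, (f s).PosSemidef) : (∫ s in a..b, f s).PosSemidef := by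
  rw [← uIcc_of_le hab] at hf
  refine .of_dotProduct_mulVec_nonneg ?_ fun x => ?_
  · rw [isHermitian_iff_isSymm, IsSymm, transpose_intervalIntegral hf]
    refine intervalIntegral.integral_congr fun s hs => ?_
    exact transpose_eq_of_isHermitian (hpos s (uIcc_of_le hab ▸ hs)).isHermitian
  · rw [star_trivial, dotProduct_intervalIntegral_mulVec hf]
    exact intervalIntegral.integral_nonneg hab fun s hs => (hpos s hs).dotProduct_mulVec_nonneg x

theorem posDef_intervalIntegral (hf : ContinuousOn f (Icc a b)) (hab : a < b)
    (hpos : ∀ s ∈ Icc a b, (f s).PosSemidef)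
    (hker : ∀ x, (∀ s ∈ Icc a b, f s *ᵥ x = 0) → x = 0) : (∫ s in a..b, f s).PosDef := by
  refine .of_dotProduct_mulVec_pos (posSemidef_intervalIntegral hf hab.le hpos).isHermitian
    fun x hx => ?_
  obtain ⟨s, hs, hsx⟩ : ∃ s ∈ Icc a b, f s *ᵥ x ≠ 0 := by
    by_contra! hzero
    exact hx (hker x hzero)
  rw [star_trivial, dotProduct_intervalIntegral_mulVec (by rwa [uIcc_of_le hab.le])]
  refine intervalIntegral.integral_pos hab (by fun_prop)
    (fun s hs => (hpos s (Ioc_subset_Icc_self hs)).dotProduct_mulVec_nonneg x) ⟨s, hs, ?_⟩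
  exact ((hpos s hs).dotProduct_mulVec_nonneg x).lt_of_ne' fun hquad =>
    hsx (((hpos s hs).dotProduct_mulVec_zero_iff x).1 hquad)

theorem hasDerivAt_intervalIntegral (hf : Continuous f) (a t : ℝ) :
    HasDerivAt (fun u => ∫ s in a..u, f s) (f t) t :=
  (hf.integral_hasStrictDerivAt a t).hasDerivAt

theorem exists_posDef_sub_integral {Q : ℝ → Matrix m m ℝ} {R₁ : Matrix m m ℝ} {t₀ t₁ : ℝ}
    (hQ : Continuous Q) (hQpsd : ∀ t, (Q t).PosSemidef) (hR₁ : R₁.PosDef)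
    (ht : t₀ < t₁) : ∃ c ∈ Ioo t₀ t₁, (R₁ - ∫ s in c..t₁, Q s).PosDef := by
  have hlim : Tendsto (fun c => R₁ + ∫ s in t₁..c, Q s) (𝓝[<] t₁) (𝓝 R₁) := by
    have hcont := ((hasDerivAt_intervalIntegral hQ t₁ t₁).continuousAt.const_add R₁).tendsto
    rw [intervalIntegral.integral_same, add_zero] at hcont
    exact hcont.mono_left nhdsWithin_le_nhds
  obtain ⟨c, hpos, hc⟩ := ((hlim.eventually (eventually_nhds_posDef_of_isHermitian hR₁)).and
    (Ioo_mem_nhdsLT ht)).exists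
  refine ⟨c, hc, ?_⟩
  rw [intervalIntegral.integral_symm, ← sub_eq_add_neg] at hpos
  exact hpos <| hR₁.isHermitian.sub
    (posSemidef_intervalIntegral hQ.continuousOn hc.2.le fun s _ => hQpsd s).isHermitian

end Calculus

section Uniqueness

theorem lipschitzWith_lyapunov (L M : Matrix m m ℝ) :
    LipschitzWith (‖L‖₊ + ‖Lᵀ‖₊) fun S => L * S + S * Lᵀ + M := by
  refine LipschitzWith.of_dist_le_mul fun S R => ?_
  have hsub : L * S + S * Lᵀ + M - (L * R + R * Lᵀ + M) = L * (S - R) + (S - R) * Lᵀ := by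
    rw [Matrix.mul_sub, Matrix.sub_mul]
    abel
  rw [dist_eq_norm, dist_eq_norm, hsub]
  calc ‖L * (S - R) + (S - R) * Lᵀ‖ ≤ ‖L‖ * ‖S - R‖ + ‖S - R‖ * ‖Lᵀ‖ :=
        norm_add_le_of_le (norm_mul_le _ _) (norm_mul_le _ _)
    _ = ↑(‖L‖₊ + ‖Lᵀ‖₊) * ‖S - R‖ := by push_cast; ring

theorem SolvesLyapunovOn.congr {L L' M M' S : ℝ → Matrix m m ℝ} {s : Set ℝ}
    (hS : SolvesLyapunovOn L M S s) (hL : EqOn L L' s) (hM : EqOn M M' s) :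
    SolvesLyapunovOn L' M' S s := fun t ht => by
  simpa only [hL ht, hM ht] using hS t ht

theorem SolvesLyapunovOn.eqOn {L M S R : ℝ → Matrix m m ℝ} {a b : ℝ}
    (hL : ContinuousOn L (Icc a b)) (hS : SolvesLyapunovOn L M S (Icc a b))
    (hR : SolvesLyapunovOn L M R (Icc a b)) (ha : S a = R a) : EqOn S R (Icc a b) := by
  obtain ⟨C, hC⟩ := isCompact_Icc.exists_bound_of_continuousOn
    (f := fun t => ‖L t‖ + ‖(L t)ᵀ‖) (by fun_prop)
  have hlip : ∀ t ∈ Ico a b, LipschitzOnWith C.toNNReal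
      (fun W => L t * W + W * (L t)ᵀ + M t) univ := fun t ht => by
    refine ((lipschitzWith_lyapunov (L t) (M t)).weaken ?_).lipschitzOnWith
    rw [← NNReal.coe_le_coe]
    exact (le_abs_self _).trans ((hC t (Ico_subset_Icc_self ht)).trans (Real.le_coe_toNNReal C))
  have hright : ∀ {W : ℝ → Matrix m m ℝ}, SolvesLyapunovOn L M W (Icc a b) → ∀ t ∈ Ico a b,
      HasDerivWithinAt W (L t * W t + W t * (L t)ᵀ + M t) (Ici t) t := fun hW t ht =>
    (hW t (Ico_subset_Icc_self ht)).mono_of_mem_nhdsWithin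
      (mem_of_superset (Icc_mem_nhdsGE ht.2) (Icc_subset_Icc_left ht.1))
  exact ODE_solution_unique_of_mem_Icc_right hlip
    (fun t ht => (hS t ht).continuousWithinAt) (hright hS) (fun _ _ => mem_univ _)
    (fun t ht => (hR t ht).continuousWithinAt) (hright hR) (fun _ _ => mem_univ _) ha

end Uniqueness

section Driftless

/-- Total controllability of the driftless system `x' = b(t) u`: over no nonempty open time interval
does a nonzero row vector annihilate `b`. -/
def IsTotallyControllable (b : ℝ → Matrix m k ℝ) : Prop :=
  ∀ ⦃c d : ℝ⦄, c < d → ∀ x, (∀ s ∈ Ioo c d, x ᵥ* b s = 0) → x = 0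

theorem IsTotallyControllable.smul {b : ℝ → Matrix m k ℝ} (hb : IsTotallyControllable b)
    {r : ℝ → ℝ} (hr : ∀ t, r t ≠ 0) : IsTotallyControllable fun t => r t • b t :=
  fun _ _ hcd x hx => hb hcd x fun s hs =>
    (smul_eq_zero_iff_right (hr s)).1 ((vecMul_smul x (r s) (b s)).symm.trans (hx s hs))

variable [Fintype k]

/-- The Gramian of `x' = b(t) u` on `[c, t]` with weight `max 0 (s - c)`. The weight switches the
control on continuously at time `c`, and makes the Gramian vanish before `c`. -/
noncomputable def rampGramian (b : ℝ → Matrix m k ℝ) (c t : ℝ) : Matrix m m ℝ :=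
  ∫ s in c..t, max 0 (s - c) • (b s * (b s)ᵀ)

variable {Q : ℝ → Matrix m m ℝ} {b : ℝ → Matrix m k ℝ} {c t : ℝ}

theorem hasDerivAt_rampGramian (hb : Continuous b) (c t : ℝ) :
    HasDerivAt (rampGramian b c) (max 0 (t - c) • (b t * (b t)ᵀ)) t :=
  hasDerivAt_intervalIntegral (f := fun s => max 0 (s - c) • (b s * (b s)ᵀ)) (by fun_prop) c t

theorem rampGramian_of_le (htc : t ≤ c) : rampGramian b c t = 0 := by
  refine (intervalIntegral.integral_congr fun s hs => ?_).trans intervalIntegral.integral_zero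
  rw [uIcc_of_ge htc] at hs
  simp only [max_eq_left (sub_nonpos.2 hs.2), zero_smul]

theorem posDef_rampGramian (hb : Continuous b) (hctrl : IsTotallyControllable b) (hct : c < t) :
    (rampGramian b c t).PosDef := by
  refine posDef_intervalIntegral (by fun_prop) hct (fun s _ => ?_) fun x hx =>
    hctrl hct x fun s hs => ?_
  · simpa only [conjTranspose_eq_transpose_of_trivial] using
      (posSemidef_self_mul_conjTranspose (b s)).smul (le_max_left 0 (s - c))
  · have hweight : max 0 (s - c) ≠ 0 := (lt_max_of_lt_right (sub_pos.2 hs.1)).ne'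
    have hzero := hx s (Ioo_subset_Icc_self hs)
    rw [smul_mulVec, smul_eq_zero_iff_right hweight] at hzero
    rwa [← conjTranspose_eq_transpose_of_trivial, self_mul_conjTranspose_mulVec_eq_zero,
      conjTranspose_eq_transpose_of_trivial, mulVec_transpose] at hzero

theorem exists_transition [DecidableEq m] (hb : Continuous b) (hctrl : IsTotallyControllable b)
    {t₁ : ℝ} (hct₁ : c < t₁) :
    ∃ (P : ℝ → Matrix m m ℝ) (v : ℝ → Matrix k m ℝ), Continuous v ∧
      (∀ t, HasDerivAt P (b t * v t) t) ∧ (∀ t ≤ c, P t = 0) ∧ (∀ t, c < t → IsUnit (P t)) ∧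
      P t₁ = 1 := by
  have hG : ∀ t, c < t → (rampGramian b c t).PosDef := fun t => posDef_rampGramian hb hctrl
  refine ⟨fun t => rampGramian b c t * (rampGramian b c t₁)⁻¹,
    fun t => max 0 (t - c) • ((b t)ᵀ * (rampGramian b c t₁)⁻¹), by fun_prop, fun t => ?_,
    fun t ht => ?_, fun t ht => (hG t ht).isUnit.mul (hG t₁ hct₁).inv.isUnit, ?_⟩
  · refine ((hasDerivAt_rampGramian hb c t).mul_const _).congr_deriv ?_
    rw [Matrix.smul_mul, Matrix.mul_smul, Matrix.mul_assoc]
  · simp only [rampGramian_of_le ht, Matrix.zero_mul]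
  · exact mul_nonsing_inv _ ((isUnit_iff_isUnit_det _).1 (hG t₁ hct₁).isUnit)

variable {R₀ R₁ : Matrix m m ℝ}

section CovarianceBridge

variable [DecidableEq m]

/-- The covariance of `(1 - P) x + P y` for independent `x`, `y` with covariances `R₀`, `R₁`. -/
def covarianceBridge (R₀ R₁ P : Matrix m m ℝ) : Matrix m m ℝ :=
  (1 - P) * R₀ * (1 - P)ᵀ + P * R₁ * Pᵀ

theorem covarianceBridge_zero : covarianceBridge R₀ R₁ 0 = R₀ := by
  simp [covarianceBridge]

theorem covarianceBridge_one : covarianceBridge R₀ R₁ 1 = R₁ := by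
  simp [covarianceBridge]

theorem posDef_covarianceBridge (hR₀ : R₀.PosSemidef) (hR₁ : R₁.PosDef) {P : Matrix m m ℝ}
    (hP : IsUnit P) : (covarianceBridge R₀ R₁ P).PosDef :=
  .posSemidef_add (posSemidef_mul_mul_transpose hR₀ _) (posDef_mul_mul_transpose hR₁ hP)

theorem hasDerivAt_covarianceBridge (hR₀ : R₀.IsHermitian) (hR₁ : R₁.IsHermitian)
    {P : ℝ → Matrix m m ℝ} {β : Matrix m k ℝ} {v : Matrix k m ℝ} {t : ℝ}
    (hP : HasDerivAt P (β * v) t) :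
    HasDerivAt (fun s => covarianceBridge R₀ R₁ (P s))
      (β * (v * (R₁ * (P t)ᵀ - R₀ * (1 - P t)ᵀ)) +
        (β * (v * (R₁ * (P t)ᵀ - R₀ * (1 - P t)ᵀ)))ᵀ) t := by
  refine ((hasDerivAt_mul_mul_transpose (hP.const_sub 1) hR₀).add
    (hasDerivAt_mul_mul_transpose hP hR₁)).congr_deriv ?_
  simp only [Matrix.mul_sub, Matrix.neg_mul, transpose_neg, transpose_sub (_ * _),
    Matrix.mul_assoc]
  abel

end CovarianceBridge

theorem exists_driftless_steering {t₀ t₁ : ℝ} (hb : Continuous b) (hctrl : IsTotallyControllable b)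
    (hQ : Continuous Q) (hQpsd : ∀ t, (Q t).PosSemidef) (ht : t₀ < t₁) (hR₀ : R₀.PosDef)
    (hR₁ : R₁.PosDef) :
    ∃ (Z : ℝ → Matrix m m ℝ) (u : ℝ → Matrix k m ℝ), Continuous u ∧ Z t₀ = R₀ ∧ Z t₁ = R₁ ∧
      (∀ t ∈ Icc t₀ t₁, (Z t).PosDef) ∧
      ∀ t, HasDerivAt Z (b t * u t + (b t * u t)ᵀ + Q t) t := by
  classical
  obtain ⟨c, hc, hR₁'⟩ := exists_posDef_sub_integral hQ hQpsd hR₁ ht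
  obtain ⟨P, v, hv, hP, hPzero, hPunit, hPone⟩ := exists_transition hb hctrl hc.2
  have hQpos : ∀ {x y : ℝ}, x ≤ y → (∫ s in x..y, Q s).PosSemidef := fun hxy =>
    posSemidef_intervalIntegral hQ.continuousOn hxy fun s _ => hQpsd s
  set R₀' := R₀ + ∫ s in t₀..c, Q s with hR₀'_def
  set R₁' := R₁ - ∫ s in c..t₁, Q s with hR₁'_def
  have hR₀' : R₀'.PosDef := hR₀.add_posSemidef (hQpos hc.1.le)
  have hPcont : Continuous P := continuous_iff_continuousAt.2 fun t => (hP t).continuousAt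
  have hbefore : ∀ t ≤ c,
      covarianceBridge R₀' R₁' (P t) + ∫ s in c..t, Q s = R₀ + ∫ s in t₀..t, Q s := fun t htc => by
    rw [hPzero t htc, covarianceBridge_zero, hR₀'_def, add_assoc,
      intervalIntegral.integral_add_adjacent_intervals (hQ.intervalIntegrable _ _)
      (hQ.intervalIntegrable _ _)]
  refine ⟨fun t => covarianceBridge R₀' R₁' (P t) + ∫ s in c..t, Q s,
    fun t => v t * (R₁' * (P t)ᵀ - R₀' * (1 - P t)ᵀ), by fun_prop, ?_, ?_, fun t ht => ?_,
    fun t => (hasDerivAt_covarianceBridge hR₀'.isHermitian hR₁'.isHermitian (hP t)).add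
      (hasDerivAt_intervalIntegral hQ c t)⟩
  · simp only [hbefore t₀ hc.1.le, intervalIntegral.integral_same, add_zero]
  · simp only [hPone, covarianceBridge_one, hR₁'_def, sub_add_cancel]
  · rcases le_or_gt t c with htc | hct
    · simp only [hbefore t htc]
      exact hR₀.add_posSemidef (hQpos ht.1)
    · exact (posDef_covarianceBridge hR₀'.posSemidef hR₁' (hPunit t hct)).add_posSemidef
        (hQpos hct.le)

end Driftless

section Steering

variable [Fintype k] [DecidableEq m] {A M Φ : ℝ → Matrix m m ℝ} {B : ℝ → Matrix m k ℝ} {t₀ t₁ : ℝ}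
  {Sig0 Sig1 : Matrix m m ℝ}

theorem exists_openLoop_steering (hΦ : ∀ t, HasDerivAt Φ (A t * Φ t) t)
    (hΦunit : ∀ t, IsUnit (Φ t)) (hB : Continuous B)
    (hctrl : IsTotallyControllable fun t => (Φ t)⁻¹ * B t) (hM : Continuous M)
    (hMpsd : ∀ t, (M t).PosSemidef) (ht : t₀ < t₁) (hSig0 : Sig0.PosDef) (hSig1 : Sig1.PosDef) :
    ∃ (S : ℝ → Matrix m m ℝ) (U : ℝ → Matrix k m ℝ), Continuous U ∧ S t₀ = Sig0 ∧ S t₁ = Sig1 ∧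
      (∀ t ∈ Icc t₀ t₁, (S t).PosDef) ∧
      ∀ t, HasDerivAt S (A t * S t + S t * (A t)ᵀ + B t * U t + (B t * U t)ᵀ + M t) t := by
  have hΦcont : Continuous Φ := continuous_iff_continuousAt.2 fun t => (hΦ t).continuousAt
  have hinv : Continuous fun t => (Φ t)⁻¹ := by
    rw [← continuousOn_univ]
    exact continuousOn_matrix_inv hΦcont.continuousOn fun t _ => hΦunit t
  have hcancel : ∀ t, Φ t * (Φ t)⁻¹ = 1 := fun t =>
    mul_nonsing_inv _ ((isUnit_iff_isUnit_det _).1 (hΦunit t))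
  have hconj : ∀ t N, Φ t * ((Φ t)⁻¹ * N * (Φ t)⁻¹ᵀ) * (Φ t)ᵀ = N := fun t N => by
    calc _ = (Φ t * (Φ t)⁻¹) * N * (Φ t * (Φ t)⁻¹)ᵀ := by
          simp only [transpose_mul, Matrix.mul_assoc]
      _ = N := by rw [hcancel, Matrix.one_mul, transpose_one, Matrix.mul_one]
  have hpos : ∀ {N : Matrix m m ℝ} t, N.PosDef → ((Φ t)⁻¹ * N * (Φ t)⁻¹ᵀ).PosDef := fun t hN =>
    posDef_mul_mul_transpose hN (isUnit_nonsing_inv_iff.2 (hΦunit t))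
  obtain ⟨Z, u, hu, hZ₀, hZ₁, hZpos, hZ⟩ := exists_driftless_steering
    (Q := fun t => (Φ t)⁻¹ * M t * (Φ t)⁻¹ᵀ) (by fun_prop) hctrl (by fun_prop)
    (fun t => posSemidef_mul_mul_transpose (hMpsd t) _) ht (hpos t₀ hSig0) (hpos t₁ hSig1)
  refine ⟨fun t => Φ t * Z t * (Φ t)ᵀ, fun t => u t * (Φ t)ᵀ, by fun_prop, ?_, ?_,
    fun t ht => posDef_mul_mul_transpose (hZpos t ht) (hΦunit t),
    fun t => (hasDerivAt_fundamental_conj (hΦ t) (hZ t)).congr_deriv ?_⟩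
  · simp only [hZ₀, hconj]
  · simp only [hZ₁, hconj]
  · have hcontrol : Φ t * ((Φ t)⁻¹ * B t * u t) * (Φ t)ᵀ = B t * (u t * (Φ t)ᵀ) := by
      simp only [← Matrix.mul_assoc, hcancel, Matrix.one_mul]
    rw [← hcontrol, Matrix.mul_add, Matrix.mul_add, Matrix.add_mul, Matrix.add_mul, hconj,
      transpose_mul _ (Φ t)ᵀ, transpose_mul (Φ t), transpose_transpose, Matrix.mul_assoc (Φ t) _ᵀ]
    abel

theorem exists_gain_steering (hΦ : ∀ t, HasDerivAt Φ (A t * Φ t) t)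
    (hΦunit : ∀ t, IsUnit (Φ t)) (hB : Continuous B)
    (hctrl : IsTotallyControllable fun t => (Φ t)⁻¹ * B t) (hM : Continuous M)
    (hMpsd : ∀ t, (M t).PosSemidef) (ht : t₀ < t₁) (hSig0 : Sig0.PosDef) (hSig1 : Sig1.PosDef) :
    ∃ (K : ℝ → Matrix k m ℝ) (S : ℝ → Matrix m m ℝ), ContinuousOn K (Icc t₀ t₁) ∧
      S t₀ = Sig0 ∧ S t₁ = Sig1 ∧ (∀ t ∈ Icc t₀ t₁, (S t).PosDef) ∧
      SolvesLyapunovOn (fun t => A t + B t * K t) M S (Icc t₀ t₁) := by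
  obtain ⟨S, U, hU, hS₀, hS₁, hSpos, hS⟩ :=
    exists_openLoop_steering hΦ hΦunit hB hctrl hM hMpsd ht hSig0 hSig1
  have hScont : Continuous S := continuous_iff_continuousAt.2 fun t => (hS t).continuousAt
  have hinv := continuousOn_matrix_inv hScont.continuousOn fun t ht => (hSpos t ht).isUnit
  refine ⟨fun t => U t * (S t)⁻¹, S, by fun_prop, hS₀, hS₁, hSpos, fun t ht => ?_⟩
  have hKS : B t * (U t * (S t)⁻¹) * S t = B t * U t := by
    rw [Matrix.mul_assoc,
      nonsing_inv_mul_cancel_right _ _ ((isUnit_iff_isUnit_det _).1 (hSpos t ht).isUnit)]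
  have hSK : S t * (B t * (U t * (S t)⁻¹))ᵀ = (B t * U t)ᵀ := by
    rw [← hKS, transpose_mul _ (S t), transpose_eq_of_isHermitian (hSpos t ht).isHermitian]
  refine ((hS t).congr_deriv ?_).hasDerivWithinAt
  rw [transpose_add, Matrix.add_mul, Matrix.mul_add, hKS, hSK]
  abel

end Steering

section Kalman

variable [DecidableEq m]

/-- Kalman controllability of `(A, B)`, as the triviality of the common left kernel of the matrices
`A ^ j * B`. In this form no ordering of the state indices is needed. -/
def IsControllable (A : Matrix m m ℝ) (B : Matrix m k ℝ) : Prop :=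
  ∀ y, (∀ j : ℕ, y ᵥ* (A ^ j * B) = 0) → y = 0

theorem isControllable_of_rank_ctrbConstMat {n p : ℕ} {A : Matrix (Fin n) (Fin n) ℝ}
    {B : Matrix (Fin n) (Fin p) ℝ} (hrank : (ctrbConstMat A B).rank = n) : IsControllable A B := by
  intro y hy
  have hrows : LinearIndependent ℝ (ctrbConstMat A B).row := by
    rw [linearIndependent_iff_card_eq_finrank_span, Set.finrank, ← rank_eq_finrank_span_row, hrank,
      Fintype.card_fin]
  refine vecMul_injective_iff.2 hrows (Eq.trans ?_ (zero_vecMul _).symm)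
  exact funext fun jl => congrFun (hy jl.1) jl.2

theorem IsControllable.neg {A : Matrix m m ℝ} {B : Matrix m k ℝ} (hAB : IsControllable A B) :
    IsControllable (-A) B := by
  refine fun y hy => hAB y fun j => ?_
  have hj := hy j
  rcases j.even_or_odd with heven | hodd
  · rwa [heven.neg_pow] at hj
  · rwa [hodd.neg_pow, Matrix.neg_mul, vecMul_neg, neg_eq_zero] at hj

variable [Finite k] {A : Matrix m m ℝ} {B : Matrix m k ℝ}

theorem vecMul_exp_mul_pow_mul_eq_zero {x : m → ℝ} {c d : ℝ}
    (hx : ∀ s ∈ Ioo c d, x ᵥ* (NormedSpace.exp (s • A) * B) = 0) (j : ℕ) :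
    ∀ s ∈ Ioo c d, x ᵥ* (NormedSpace.exp (s • A) * (A ^ j * B)) = 0 := by
  induction j with
  | zero => simpa only [pow_zero, Matrix.one_mul] using hx
  | succ j ih =>
    cases nonempty_fintype k
    intro s hs
    have hderiv := hasDerivAt_vecMul_mul x (A ^ j * B)
      (hasDerivAt_exp_smul_const (𝕂 := ℝ) A s)
    have hconst : (fun s : ℝ => x ᵥ* (NormedSpace.exp (s • A) * (A ^ j * B))) =ᶠ[𝓝 s] 0 := by
      filter_upwards [Ioo_mem_nhds hs.1 hs.2] with u hu using ih u hu
    rw [pow_succ', Matrix.mul_assoc A, ← Matrix.mul_assoc _ A]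
    exact hderiv.unique ((hasDerivAt_const s 0).congr_of_eventuallyEq hconst)

theorem IsControllable.isTotallyControllable_exp (hAB : IsControllable A B) :
    IsTotallyControllable fun t => NormedSpace.exp (t • A) * B := by
  intro c d hcd x hx
  obtain ⟨s, hs⟩ := nonempty_Ioo.2 hcd
  have hzero : x ᵥ* NormedSpace.exp (s • A) = 0 := hAB _ fun j => by
    rw [vecMul_vecMul]
    exact vecMul_exp_mul_pow_mul_eq_zero hx j s hs
  exact vecMul_injective_of_isUnit (Matrix.isUnit_exp (s • A)) (hzero.trans (zero_vecMul _).symm)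

/-- The fundamental matrix of `x' = (A + ν(t) I) x` that is the identity at time `0`. -/
noncomputable def fundamentalMatrix (A : Matrix m m ℝ) (ν : ℝ → ℝ) (t : ℝ) : Matrix m m ℝ :=
  Real.exp (∫ s in (0 : ℝ)..t, ν s) • NormedSpace.exp (t • A)

variable {ν : ℝ → ℝ}

theorem hasDerivAt_fundamentalMatrix (hν : Continuous ν) (t : ℝ) :
    HasDerivAt (fundamentalMatrix A ν) ((A + ν t • 1) * fundamentalMatrix A ν t) t := by
  have hgrowth := (hν.integral_hasStrictDerivAt 0 t).hasDerivAt.exp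
  refine (hgrowth.smul (hasDerivAt_exp_smul_const' (𝕂 := ℝ) A t)).congr_deriv ?_
  simp only [fundamentalMatrix, Matrix.add_mul, Matrix.mul_smul, Matrix.smul_mul, Matrix.one_mul,
    smul_add, smul_smul, mul_comm]
  rfl

theorem fundamentalMatrix_mul_inverse (t : ℝ) :
    fundamentalMatrix A ν t *
      (Real.exp (-∫ s in (0 : ℝ)..t, ν s) • NormedSpace.exp (t • -A)) = 1 := by
  have hexp : NormedSpace.exp (t • A) * NormedSpace.exp (t • -A) = 1 := by
    rw [smul_neg, Matrix.exp_neg]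
    exact mul_nonsing_inv _ ((isUnit_iff_isUnit_det _).1 (Matrix.isUnit_exp _))
  rw [fundamentalMatrix, smul_mul_smul_comm, hexp, ← Real.exp_add, add_neg_cancel, Real.exp_zero,
    one_smul]

theorem isTotallyControllable_fundamentalMatrix_inv_mul (hAB : IsControllable A B) :
    IsTotallyControllable fun t => (fundamentalMatrix A ν t)⁻¹ * B := by
  simp only [inv_eq_right_inv (fundamentalMatrix_mul_inverse _), Matrix.smul_mul]
  exact hAB.neg.isTotallyControllable_exp.smul fun t => Real.exp_ne_zero _

end Kalman

end CovarianceSteering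

open CovarianceSteering

theorem stmt_17_general {m k : Type*} [Fintype m] [DecidableEq m] [Fintype k]
    {A : Matrix m m ℝ} {B : Matrix m k ℝ} (hAB : IsControllable A B)
    {Sig0 Sig1 : Matrix m m ℝ} (hSig0 : Sig0.PosDef) (hSig1 : Sig1.PosDef)
    {t₀ t₁ : ℝ} (ht : t₀ < t₁) {M : ℝ → Matrix m m ℝ} {ν : ℝ → ℝ}
    (hM : ContinuousOn M (Icc t₀ t₁)) (hν : ContinuousOn ν (Icc t₀ t₁))
    (hMpsd : ∀ t ∈ Icc t₀ t₁, (M t).PosSemidef) :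
    ∃ K : ℝ → Matrix k m ℝ, ContinuousOn K (Icc t₀ t₁) ∧
      (∃ S, S t₀ = Sig0 ∧
        SolvesLyapunovOn (fun t => A + B * K t + ν t • 1) M S (Icc t₀ t₁)) ∧
      ∀ S, S t₀ = Sig0 → SolvesLyapunovOn (fun t => A + B * K t + ν t • 1) M S (Icc t₀ t₁) →
        (∀ t ∈ Icc t₀ t₁, (S t).PosDef) ∧ S t₁ = Sig1 := by
  let M' := IccExtend ht.le ((Icc t₀ t₁).domRestrict M)
  let ν' := IccExtend ht.le ((Icc t₀ t₁).domRestrict ν)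
  have hM' : Continuous M' := hM.domRestrict.Icc_extend'
  have hν' : Continuous ν' := hν.domRestrict.Icc_extend'
  obtain ⟨K, R, hK, hR₀, hR₁, hRpos, hR⟩ := exists_gain_steering (A := fun t => A + ν' t • 1)
    (B := fun _ => B) (M := M') (hasDerivAt_fundamentalMatrix hν')
    (fun t => .of_mul_eq_one _ (fundamentalMatrix_mul_inverse t)) continuous_const
    (isTotallyControllable_fundamentalMatrix_inv_mul hAB) hM'
    (fun t => hMpsd _ (projIcc t₀ t₁ ht.le t).2) ht hSig0 hSig1
  have hR' : SolvesLyapunovOn (fun t => A + B * K t + ν t • 1) M R (Icc t₀ t₁) := by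
    refine hR.congr (fun t ht' => ?_) fun t ht' => IccExtend_of_mem ht.le _ ht'
    have hνt : ν' t = ν t := IccExtend_of_mem ht.le _ ht'
    simp only [hνt, add_right_comm]
  refine ⟨K, hK, ⟨R, hR₀, hR'⟩, fun S hS₀ hS => ?_⟩
  have hSR : EqOn S R (Icc t₀ t₁) := hS.eqOn (by fun_prop) hR' (hS₀.trans hR₀.symm)
  exact ⟨fun t ht' => hSR ht' ▸ hRpos t ht', (hSR (right_mem_Icc.2 ht.le)).trans hR₁⟩

theorem stmt_17 {n p : ℕ} (hn : 1 ≤ n) (hp : 1 ≤ p)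
    (A : Matrix (Fin n) (Fin n) ℝ) (B : Matrix (Fin n) (Fin p) ℝ)
    (hctrb : (ctrbConstMat A B).rank = n)
    (Sig0 Sig1 : Matrix (Fin n) (Fin n) ℝ) (hSig0 : Sig0.PosDef) (hSig1 : Sig1.PosDef)
    (M : ℝ → Matrix (Fin n) (Fin n) ℝ) (ν : ℝ → ℝ)
    (hM : ∀ i j, ContDiffOn ℝ (max (n - 2) 0 : ℕ) (fun t => M t i j) (Set.Icc 0 1))
    (hν : ContDiffOn ℝ (max (n - 2) 0 : ℕ) ν (Set.Icc 0 1))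
    (hMpsd : ∀ t ∈ Set.Icc (0:ℝ) 1, (M t).PosSemidef)
    (hνpos : ∀ t ∈ Set.Icc (0:ℝ) 1, 0 ≤ ν t) :
    ∃ K : ℝ → Matrix (Fin p) (Fin n) ℝ,
      ContinuousOn K (Set.Icc 0 1) ∧
      ∀ S : ℝ → Matrix (Fin n) (Fin n) ℝ, S 0 = Sig0 →
        (∀ t ∈ Set.Icc (0:ℝ) 1, ∀ (i j : Fin n),
          HasDerivWithinAt (fun τ : ℝ => S τ i j)
            (((A + B * K t) * S t + S t * (A + B * K t)ᵀ + M t + (2 * ν t) • S t) i j)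
            (Set.Icc (0:ℝ) 1) t) →
        (∀ t ∈ Set.Icc (0:ℝ) 1, (S t).PosDef) ∧ S 1 = Sig1 := by
  obtain ⟨K, hK, -, hsteer⟩ := stmt_17_general (isControllable_of_rank_ctrbConstMat hctrb) hSig0
    hSig1 zero_lt_one (continuousOn_pi.2 fun i => continuousOn_pi.2 fun j => (hM i j).continuousOn)
    hν.continuousOn hMpsd
  exact ⟨K, hK, fun S hS₀ hS => hsteer S hS₀ (solvesLyapunovOn_add_smul_one_iff.2 hS)⟩
end

section
/- Let A : [0,1] → ℝ^{n×n} be of class C^{n−1} and B : [0,1] → ℝ^{n×p} of class C^n, and assume the pair (A(t), B(t)) is uniformly controllable and index invariant on [0,1]. Let N, ν be of class C^{max(n−2,0)} on [0,1] with N(t) symmetric positive semidefinite and ν(t) ≥ 0. Then for any symmetric positive definite Σ₀ and Σ₁ there exists a bounded, piecewise continuous K : [0,1] → ℝ^{p×n} such that the solution of Σ'(t) = (A(t) + B(t)K(t))Σ + Σ(A(t) + B(t)K(t))ᵀ + N(t) + 2ν(t)Σ with Σ(0) = Σ₀ satisfies Σ(t) ≻ 0 (symmetric positive definite) for all t ∈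 [0,1] and Σ(1) = Σ₁. -/
/-!
Absorb `ν` into the drift, `F = A + ν`, and let `Y` be a fundamental solution of `Y' = F Y`, with
inverse `Z`. In the coordinates `Σ = Y S Yᵀ` the Lyapunov equation becomes
`S' = C U + (C U)ᵀ + M` with `C = Z B` and `M = Z N Zᵀ ⪰ 0`. Here `U` may be prescribed freely:
once `S` is known to be invertible, the feedback `K = U S⁻¹ Z` realises it.

The rank condition prevents a nonzero covector `w` from annihilating `C` near the final time `b`:
if `w Z Γ₀` vanishes there then so do its derivatives, and `(w Z Γₖ)' = w Z Γₖ₊₁ - ν w Z Γₖ` shows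
by induction that every `w Z Γₖ` vanishes. Hence the Gramian
`W(t) = ∫ₜᵇ (τ - c)⁺ C(τ) C(τ)ᵀ dτ` is positive definite for all `t < b`, whatever the delay
`c < b`, and `G(t) = W(t) W(a)⁻¹` satisfies `G' = C J` with `J` continuous, stays equal to `1` up to
time `c`, is invertible before `b`, and ends at `0`. Therefore, when there is no noise,
`G S₀ Gᵀ + (1 - G) S₁ (1 - G)ᵀ` joins `S₀` to `S₁` through positive definite matrices and solves
the equation for an explicit `U`.

The noise is dealt with by waiting. Choose `c` so close to `b` that `Q = S₁ - ∫ M` over `[c, b]` is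
still positive definite, and steer `P = S₀ + ∫ M` over `[a, c]` to `Q` instead. Then
`G P Gᵀ + (1 - G) Q (1 - G)ᵀ + ∫ M` over `[c, t]` is `S₀` plus the accumulated noise while `t ≤ c`
and dominates a positive definite matrix afterwards. The resulting `K` is continuous.
-/

open Matrix

/-- The matrix `Θᵢ(t) = [Γ₀(t) Γ₁(t) ⋯ Γ_{i−1}(t)]`. -/
def thetaMat {n p : ℕ} (Γ : ℕ → ℝ → Matrix (Fin n) (Fin p) ℝ) (i : ℕ) (t : ℝ) :
    Matrix (Fin n) (Fin i × Fin p) ℝ :=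
  Matrix.of fun a kj => Γ (kj.1 : ℕ) t a kj.2

open Set Filter
open scoped Topology NNReal

section GlobalPicardLindelof

variable {E : Type*} [NormedAddCommGroup E] [NormedSpace ℝ E]

/-- The radial retraction onto the closed ball of radius `R` about `0`. It turns a globally
Lipschitz vector field into a bounded one without changing it on that ball. -/
noncomputable def radialRetraction (R : ℝ) (v : E) : E := (R / max R ‖v‖) • v

theorem norm_radialRetraction_le {R : ℝ} (hR : 0 < R) (v : E) : ‖radialRetraction R v‖ ≤ R := by
  have hmax : 0 < max R ‖v‖ := lt_max_of_lt_left hR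
  rw [radialRetraction, norm_smul, Real.norm_of_nonneg (by positivity), div_mul_eq_mul_div,
    div_le_iff₀ hmax]
  exact mul_le_mul_of_nonneg_left (le_max_right _ _) hR.le

theorem radialRetraction_of_norm_le {R : ℝ} (hR : 0 < R) {v : E} (hv : ‖v‖ ≤ R) :
    radialRetraction R v = v := by
  rw [radialRetraction, max_eq_left hv, div_self hR.ne', one_smul]

theorem norm_radialRetraction_le_norm {R : ℝ} (hR : 0 < R) (v : E) :
    ‖radialRetraction R v‖ ≤ ‖v‖ := by
  rcases le_total ‖v‖ R with hv | hv
  · rw [radialRetraction_of_norm_le hR hv]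
  · exact (norm_radialRetraction_le hR v).trans hv

theorem lipschitzWith_radialRetraction {R : ℝ} (hR : 0 < R) :
    LipschitzWith 2 (radialRetraction R : E → E) := by
  refine LipschitzWith.of_dist_le_mul fun v w => ?_
  have hv : 0 < max R ‖v‖ := lt_max_of_lt_left hR
  have hw : 0 < max R ‖w‖ := lt_max_of_lt_left hR
  have hRv : R / max R ‖v‖ ≤ 1 := (div_le_one hv).2 (le_max_left _ _)
  have hww : ‖w‖ / max R ‖w‖ ≤ 1 := (div_le_one hw).2 (le_max_right _ _)
  have hmax : |max R ‖w‖ - max R ‖v‖| ≤ ‖v - w‖ := by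
    rw [max_comm R, max_comm R, norm_sub_rev]
    exact (abs_max_sub_max_le_abs _ _ _).trans (abs_norm_sub_norm_le w v)
  have hfactor : ‖(R / max R ‖v‖ - R / max R ‖w‖) • w‖ ≤ ‖v - w‖ := by
    calc ‖(R / max R ‖v‖ - R / max R ‖w‖) • w‖
        = R / max R ‖v‖ * (‖w‖ / max R ‖w‖) * |max R ‖w‖ - max R ‖v‖| := by
          rw [norm_smul, Real.norm_eq_abs,
            show R / max R ‖v‖ - R / max R ‖w‖ =
              R / max R ‖v‖ * (max R ‖w‖ - max R ‖v‖) / max R ‖w‖ by field_simp,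
            abs_div, abs_mul, abs_of_pos hw, abs_of_pos (div_pos hR hv)]
          ring
      _ ≤ 1 * 1 * ‖v - w‖ := by gcongr
      _ = ‖v - w‖ := by ring
  calc dist (radialRetraction R v) (radialRetraction R w)
      = ‖(R / max R ‖v‖) • (v - w) + (R / max R ‖v‖ - R / max R ‖w‖) • w‖ := by
        rw [dist_eq_norm, radialRetraction, radialRetraction]
        congr 1
        module
    _ ≤ R / max R ‖v‖ * ‖v - w‖ + ‖v - w‖ := by
        refine (norm_add_le _ _).trans (add_le_add ?_ hfactor)
        rw [norm_smul, Real.norm_of_nonneg (by positivity)]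
    _ ≤ 1 * ‖v - w‖ + ‖v - w‖ := by gcongr
    _ = (2 : ℝ≥0) * dist v w := by rw [dist_eq_norm, NNReal.coe_ofNat]; ring

theorem hasDerivWithinAt_Ici_of_Icc {f : ℝ → E} {f' : E} {a b t : ℝ}
    (hf : HasDerivWithinAt f f' (Icc a b) t) (ht : t ∈ Ico a b) :
    HasDerivWithinAt f f' (Ici t) t :=
  hf.mono_of_mem_nhdsWithin
    (mem_of_superset (Icc_mem_nhdsGE ht.2) (Icc_subset_Icc_left ht.1))

variable [CompleteSpace E]

theorem exists_hasDerivWithinAt_of_lipschitzWith_of_norm_le {f : ℝ → E → E} {a b : ℝ}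
    (hab : a ≤ b) {K L : ℝ≥0} (hlip : ∀ t ∈ Icc a b, LipschitzWith K (f t))
    (hcont : ∀ x, ContinuousOn (f · x) (Icc a b)) (hL : ∀ t ∈ Icc a b, ∀ x, ‖f t x‖ ≤ L) (x₀ : E) :
    ∃ x : ℝ → E, x a = x₀ ∧ ∀ t ∈ Icc a b, HasDerivWithinAt x (f t (x t)) (Icc a b) t := by
  have hpl : IsPicardLindelof f ⟨a, left_mem_Icc.2 hab⟩ x₀ (L * (b - a).toNNReal) 0 L K := by
    refine ⟨fun t ht => (hlip t ht).lipschitzOnWith, fun x _ => hcont x,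
      fun t ht x _ => hL t ht x, ?_⟩
    simp [sub_nonneg.2 hab]
  exact hpl.exists_eq_forall_mem_Icc_hasDerivWithinAt₀

/-- Truncating the vector field at radius `R` makes it bounded, so Picard–Lindelöf applies on all of
`[a, b]`; if `R` is the Grönwall bound, then the truncation is never active. -/
theorem exists_hasDerivWithinAt_of_lipschitzWith {f : ℝ → E → E} {a b : ℝ} (hab : a ≤ b)
    {K : ℝ≥0} (hlip : ∀ t ∈ Icc a b, LipschitzWith K (f t))
    (hcont : ∀ x, ContinuousOn (f · x) (Icc a b)) (x₀ : E) :
    ∃ x : ℝ → E, x a = x₀ ∧ ∀ t ∈ Icc a b, HasDerivWithinAt x (f t (x t)) (Icc a b) t := by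
  obtain ⟨ε, hε⟩ := isCompact_Icc.exists_bound_of_continuousOn (hcont 0)
  have hε0 : 0 ≤ ε := (norm_nonneg _).trans (hε a (left_mem_Icc.2 hab))
  have hgrowth : ∀ t ∈ Icc a b, ∀ {v : E} {r : ℝ}, ‖v‖ ≤ r → ‖f t v‖ ≤ K * r + ε := by
    intro t ht v r hv
    have hlip0 := (hlip t ht).norm_sub_le v 0
    rw [sub_zero] at hlip0
    linarith [hε t ht, norm_le_norm_add_norm_sub' (f t v) (f t 0),
      mul_le_mul_of_nonneg_left hv K.coe_nonneg]
  have hmono := gronwallBound_mono (norm_nonneg x₀) hε0 K.coe_nonneg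
  set R : ℝ := gronwallBound ‖x₀‖ K ε (b - a) + 1
  have hR : 0 < R := by
    have hδ := hmono (sub_nonneg.2 hab)
    rw [gronwallBound_x0] at hδ
    linarith [norm_nonneg x₀]
  obtain ⟨x, hxa, hx⟩ := exists_hasDerivWithinAt_of_lipschitzWith_of_norm_le
    (f := fun t v => f t (radialRetraction R v)) (L := ⟨K * R + ε, by positivity⟩) hab
    (fun t ht => (hlip t ht).comp (lipschitzWith_radialRetraction hR)) (fun v => hcont _)
    (fun t ht v => hgrowth t ht (norm_radialRetraction_le hR v)) x₀
  have hbound := norm_le_gronwallBound_of_norm_deriv_right_le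
    (fun t ht => (hx t ht).continuousWithinAt)
    (fun t ht => hasDerivWithinAt_Ici_of_Icc (hx t (Ico_subset_Icc_self ht)) ht)
    (congrArg norm hxa).le
    (fun t ht => hgrowth t (Ico_subset_Icc_self ht) (norm_radialRetraction_le_norm hR _))
  refine ⟨x, hxa, fun t ht => ?_⟩
  have htR : ‖x t‖ ≤ R := (hbound t ht).trans
    ((hmono (sub_le_sub_right ht.2 a)).trans (le_add_of_nonneg_right zero_le_one))
  simpa only [radialRetraction_of_norm_le hR htR] using hx t ht

theorem exists_hasDerivWithinAt_continuousLinearMap {T : ℝ → E →L[ℝ] E} {a b : ℝ} (hab : a ≤ b)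
    (hT : ContinuousOn T (Icc a b)) (x₀ : E) :
    ∃ x : ℝ → E, x a = x₀ ∧ ∀ t ∈ Icc a b, HasDerivWithinAt x (T t (x t)) (Icc a b) t := by
  obtain ⟨K, hK⟩ := isCompact_Icc.exists_bound_of_continuousOn hT
  refine exists_hasDerivWithinAt_of_lipschitzWith (f := fun t => T t) (K := K.toNNReal) hab
    (fun t ht => ?_) (fun x => hT.clm_apply continuousOn_const) x₀
  exact (T t).lipschitz.weaken (NNReal.coe_le_coe.1 ((hK t ht).trans (Real.le_coe_toNNReal K)))

end GlobalPicardLindelof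

section FundamentalSolution

variable {𝔸 : Type*} [NormedRing 𝔸] [NormedAlgebra ℝ 𝔸] [CompleteSpace 𝔸]

theorem exists_fundamental_solution {F : ℝ → 𝔸} {a b : ℝ} (hab : a ≤ b)
    (hF : ContinuousOn F (Icc a b)) :
    ∃ Y Z : ℝ → 𝔸, (∀ t ∈ Icc a b, HasDerivWithinAt Y (F t * Y t) (Icc a b) t) ∧
      (∀ t ∈ Icc a b, HasDerivWithinAt Z (-(Z t * F t)) (Icc a b) t) ∧
      ∀ t ∈ Icc a b, Z t * Y t = 1 := by
  obtain ⟨Y, hYa, hY⟩ := exists_hasDerivWithinAt_continuousLinearMap hab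
    ((ContinuousLinearMap.mul ℝ 𝔸).continuous.comp_continuousOn hF) 1
  obtain ⟨Z, hZa, hZ⟩ := exists_hasDerivWithinAt_continuousLinearMap hab
    ((-(ContinuousLinearMap.mul ℝ 𝔸).flip).continuous.comp_continuousOn hF) 1
  have hZY : ∀ t ∈ Icc a b, HasDerivWithinAt (fun t => Z t * Y t) 0 (Icc a b) t := fun t ht => by
    refine ((hZ t ht).fun_mul (hY t ht)).congr_deriv ?_
    simp [mul_assoc]
  refine ⟨Y, Z, hY, hZ, fun t ht => ?_⟩
  have hconst := constant_of_has_deriv_right_zero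
    (fun s hs => (hZY s hs).continuousWithinAt)
    (fun s hs => hasDerivWithinAt_Ici_of_Icc (hZY s (Ico_subset_Icc_self hs)) hs) t ht
  rwa [hYa, hZa, one_mul] at hconst

end FundamentalSolution

section Calculus

theorem exists_continuous_eqOn_Icc {α : Type*} [TopologicalSpace α] {f : ℝ → α} {a b : ℝ}
    (hab : a ≤ b) (hf : ContinuousOn f (Icc a b)) : ∃ g, Continuous g ∧ EqOn g f (Icc a b) :=
  ⟨IccExtend hab (domRestrict (Icc a b) f),
    (continuousOn_iff_continuous_domRestrict.1 hf).Icc_extend',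
    fun _ ht => IccExtend_of_mem hab _ ht⟩

theorem eventually_eq_zero_of_hasDerivAt {E : Type*} [NormedAddCommGroup E] [NormedSpace ℝ E]
    {f f' : ℝ → E} {b : ℝ} (hf : ∀ᶠ t in 𝓝[<] b, f t = 0)
    (hf' : ∀ᶠ t in 𝓝[<] b, HasDerivAt f (f' t) t) : ∀ᶠ t in 𝓝[<] b, f' t = 0 := by
  filter_upwards [eventually_eventually_nhdsWithin.2 hf, hf', self_mem_nhdsWithin]
    with t hft hf't htb
  rw [isOpen_Iio.nhdsWithin_eq htb] at hft
  exact hf't.unique ((hasDerivAt_const t (0 : E)).congr_of_eventuallyEq hft)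

end Calculus

section MatrixCalculus

open scoped Matrix.Norms.Elementwise

variable {m n k : Type*} [Fintype n] {s : Set ℝ} {t : ℝ}

theorem continuousOn_matrix_mul {X : ℝ → Matrix m n ℝ} {Y : ℝ → Matrix n k ℝ}
    (hX : ContinuousOn X s) (hY : ContinuousOn Y s) : ContinuousOn (fun τ => X τ * Y τ) s :=
  (continuous_fst.matrix_mul continuous_snd).comp_continuousOn (hX.prodMk hY)

theorem continuousOn_matrix_transpose {X : ℝ → Matrix m k ℝ} (hX : ContinuousOn X s) :
    ContinuousOn (fun τ => (X τ)ᵀ) s :=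
  continuous_id.matrix_transpose.comp_continuousOn hX

theorem continuousOn_matrix_inv [DecidableEq n] {X : ℝ → Matrix n n ℝ} (hX : ContinuousOn X s)
    (hunit : ∀ τ ∈ s, IsUnit (X τ)) : ContinuousOn (fun τ => (X τ)⁻¹) s := by
  rw [continuousOn_iff_continuous_domRestrict] at *
  simp only [Set.domRestrict_def, Matrix.inv_def, Ring.inverse_eq_inv'] at *
  exact (hX.matrix_det.inv₀ fun τ => ((X τ).isUnit_iff_isUnit_det.1 (hunit τ τ.2)).ne_zero).smul
    hX.matrix_adjugate

theorem exists_abs_entry_le_of_continuousOn [Finite m] [Finite k] {X : ℝ → Matrix m k ℝ}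
    (hs : IsCompact s) (hX : ContinuousOn X s) : ∃ c, ∀ τ ∈ s, ∀ i j, |X τ i j| ≤ c := by
  have := Fintype.ofFinite m
  have := Fintype.ofFinite k
  obtain ⟨c, hc⟩ := hs.exists_bound_of_continuousOn hX
  exact ⟨c, fun τ hτ i j => (norm_entry_le_entrywise_sup_norm (X τ)).trans (hc τ hτ)⟩

theorem continuousOn_matrix_of_contDiffOn {X : ℝ → Matrix m k ℝ} {r : WithTop ℕ∞}
    (hX : ∀ i j, ContDiffOn ℝ r (fun τ => X τ i j) s) : ContinuousOn X s :=
  continuousOn_pi.2 fun i => continuousOn_pi.2 fun j => (hX i j).continuousOn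

theorem hasDerivWithinAt_matrix [Finite k] {X : ℝ → Matrix m k ℝ} {X' : Matrix m k ℝ} :
    HasDerivWithinAt X X' s t ↔ ∀ i j, HasDerivWithinAt (fun τ => X τ i j) (X' i j) s t := by
  have := Fintype.ofFinite k
  exact hasDerivWithinAt_pi.trans (forall_congr' fun _ => hasDerivWithinAt_pi)

theorem continuousOn_of_hasDerivWithinAt_matrix [Finite m] [Finite k] {X X' : ℝ → Matrix m k ℝ}
    (hX : ∀ τ ∈ s, HasDerivWithinAt X (X' τ) s τ) : ContinuousOn X s := by
  have := Fintype.ofFinite m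
  have := Fintype.ofFinite k
  exact fun τ hτ => (hX τ hτ).continuousWithinAt

theorem hasDerivWithinAt_matrix_mul [Finite k] {X : ℝ → Matrix m n ℝ} {Y : ℝ → Matrix n k ℝ}
    {X' : Matrix m n ℝ} {Y' : Matrix n k ℝ} (hX : HasDerivWithinAt X X' s t)
    (hY : HasDerivWithinAt Y Y' s t) :
    HasDerivWithinAt (fun τ => X τ * Y τ) (X' * Y t + X t * Y') s t := by
  rw [hasDerivWithinAt_matrix] at hX hY ⊢
  intro i j
  simp only [Matrix.add_apply, Matrix.mul_apply, ← Finset.sum_add_distrib]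
  exact HasDerivWithinAt.fun_sum fun l _ => (hX i l).mul (hY l j)

theorem hasDerivWithinAt_matrix_transpose [Finite m] [Finite k] {X : ℝ → Matrix m k ℝ}
    {X' : Matrix m k ℝ} (hX : HasDerivWithinAt X X' s t) :
    HasDerivWithinAt (fun τ => (X τ)ᵀ) X'ᵀ s t := by
  rw [hasDerivWithinAt_matrix] at hX ⊢
  exact fun i j => hX j i

theorem hasDerivWithinAt_vecMul [Finite k] {x : ℝ → n → ℝ} {X : ℝ → Matrix n k ℝ} {x' : n → ℝ}
    {X' : Matrix n k ℝ} (hx : HasDerivWithinAt x x' s t) (hX : HasDerivWithinAt X X' s t) :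
    HasDerivWithinAt (fun τ => x τ ᵥ* X τ) (x' ᵥ* X t + x t ᵥ* X') s t := by
  rw [hasDerivWithinAt_pi] at hx ⊢
  rw [hasDerivWithinAt_matrix] at hX
  intro j
  simp only [Pi.add_apply, Matrix.vecMul, dotProduct, ← Finset.sum_add_distrib]
  exact HasDerivWithinAt.fun_sum fun l _ => (hx l).mul (hX l j)

end MatrixCalculus

section MatrixFundamentalSolution

open scoped Matrix.Norms.Operator

/-- The operator norm makes the matrices a Banach algebra; the conclusion only involves their
topology, so it is independent of that choice. -/
theorem exists_matrix_fundamental_solution {m : Type*} [Fintype m] [DecidableEq m]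
    {F : ℝ → Matrix m m ℝ} {a b : ℝ} (hab : a ≤ b) (hF : ContinuousOn F (Icc a b)) :
    ∃ Y Z : ℝ → Matrix m m ℝ, (∀ t ∈ Icc a b, HasDerivWithinAt Y (F t * Y t) (Icc a b) t) ∧
      (∀ t ∈ Icc a b, HasDerivWithinAt Z (-(Z t * F t)) (Icc a b) t) ∧
      ∀ t ∈ Icc a b, Z t * Y t = 1 :=
  exists_fundamental_solution hab hF

end MatrixFundamentalSolution

section PositiveDefinite

open scoped Matrix.Norms.Elementwise

variable {m : Type*}

theorem eventually_posDef_of_isHermitian [Finite m] {S : Matrix m m ℝ} (hS : S.PosDef) :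
    ∀ᶠ X in 𝓝 S, X.IsHermitian → X.PosDef := by
  have := Fintype.ofFinite m
  have hsphere : ∀ᶠ X in 𝓝 S, ∀ w ∈ Metric.sphere (0 : m → ℝ) 1, 0 < w ⬝ᵥ (X *ᵥ w) := by
    refine (isCompact_sphere _ _).eventually_forall_of_forall_eventually fun w hw => ?_
    have hcont : Continuous fun z : Matrix m m ℝ × (m → ℝ) => z.2 ⬝ᵥ (z.1 *ᵥ z.2) := by fun_prop
    refine hcont.continuousAt.eventually (lt_mem_nhds ?_)
    exact hS.dotProduct_mulVec_pos (ne_zero_of_mem_unit_sphere ⟨w, hw⟩)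
  filter_upwards [hsphere] with X hX hherm
  refine PosDef.of_dotProduct_mulVec_pos hherm fun w hw => ?_
  have hpos := hX (‖w‖⁻¹ • w) (by simp [norm_smul, hw])
  rw [mulVec_smul, smul_dotProduct, dotProduct_smul, smul_smul, smul_eq_mul] at hpos
  exact pos_of_mul_pos_right hpos (by positivity)

variable [Fintype m] {X : ℝ → Matrix m m ℝ} {a b : ℝ}

theorem dotProduct_integral_mulVec (hX : ContinuousOn X (uIcc a b)) (w : m → ℝ) :
    w ⬝ᵥ ((∫ τ in a..b, X τ) *ᵥ w) = ∫ τ in a..b, w ⬝ᵥ (X τ *ᵥ w) := by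
  let q : Matrix m m ℝ →ₗ[ℝ] ℝ :=
    { toFun := fun Y => w ⬝ᵥ (Y *ᵥ w)
      map_add' := fun Y Z => by rw [add_mulVec, dotProduct_add]
      map_smul' := fun c Y => by rw [smul_mulVec, dotProduct_smul, RingHom.id_apply] }
  exact (q.toContinuousLinearMap.intervalIntegral_comp_comm hX.intervalIntegrable).symm

theorem isHermitian_integral (hX : ContinuousOn X (uIcc a b))
    (hherm : ∀ τ ∈ uIcc a b, (X τ).IsHermitian) : (∫ τ in a..b, X τ).IsHermitian := by
  let T : Matrix m m ℝ →L[ℝ] Matrix m m ℝ :=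
    (transposeLinearEquiv m m ℝ ℝ).toLinearMap.toContinuousLinearMap
  calc (∫ τ in a..b, X τ)ᴴ = T (∫ τ in a..b, X τ) := conjTranspose_eq_transpose_of_trivial _
    _ = ∫ τ in a..b, T (X τ) := (T.intervalIntegral_comp_comm hX.intervalIntegrable).symm
    _ = ∫ τ in a..b, X τ := intervalIntegral.integral_congr fun τ hτ =>
      (conjTranspose_eq_transpose_of_trivial (X τ)).symm.trans (hherm τ hτ)

theorem posSemidef_integral (hab : a ≤ b) (hX : ContinuousOn X (Icc a b))
    (hpsd : ∀ τ ∈ Icc a b, (X τ).PosSemidef) : (∫ τ in a..b, X τ).PosSemidef := by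
  rw [← uIcc_of_le hab] at hX hpsd
  refine PosSemidef.of_dotProduct_mulVec_nonneg
    (isHermitian_integral hX fun τ hτ => (hpsd τ hτ).isHermitian) fun w => ?_
  rw [star_trivial, dotProduct_integral_mulVec hX]
  rw [uIcc_of_le hab] at hpsd
  exact intervalIntegral.integral_nonneg hab fun τ hτ => (hpsd τ hτ).dotProduct_mulVec_nonneg w

theorem posDef_integral (hab : a < b) (hX : ContinuousOn X (Icc a b))
    (hpsd : ∀ τ ∈ Icc a b, (X τ).PosSemidef)
    (hpos : ∀ w ≠ 0, ∃ τ ∈ Icc a b, w ⬝ᵥ (X τ *ᵥ w) ≠ 0) : (∫ τ in a..b, X τ).PosDef := by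
  refine PosDef.of_dotProduct_mulVec_pos (posSemidef_integral hab.le hX hpsd).isHermitian
    fun w hw => ?_
  rw [star_trivial, dotProduct_integral_mulVec (uIcc_of_le hab.le ▸ hX)]
  have hnonneg : ∀ τ ∈ Icc a b, 0 ≤ w ⬝ᵥ (X τ *ᵥ w) := fun τ hτ =>
    (hpsd τ hτ).dotProduct_mulVec_nonneg w
  have hcont : ContinuousOn (fun τ => w ⬝ᵥ (X τ *ᵥ w)) (Icc a b) :=
    (show Continuous fun Y : Matrix m m ℝ => w ⬝ᵥ (Y *ᵥ w) by fun_prop).comp_continuousOn hX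
  obtain ⟨τ, hτ, hτw⟩ := hpos w hw
  exact intervalIntegral.integral_pos hab hcont
    (fun τ hτ => hnonneg τ (Ioc_subset_Icc_self hτ)) ⟨τ, hτ, (hnonneg τ hτ).lt_of_ne' hτw⟩

end PositiveDefinite

section Steering

open scoped Matrix.Norms.Elementwise

variable {m q : Type*} [Fintype m] [Fintype q] {C : ℝ → Matrix m q ℝ} {a b c t : ℝ}

/-- The Gramian `∫ₜᵇ (τ - c)⁺ C(τ) C(τ)ᵀ dτ` of the driftless system `x' = C u`, for controls that
are switched on continuously at time `c`. -/
noncomputable def delayedGramian (C : ℝ → Matrix m q ℝ) (b c t : ℝ) : Matrix m m ℝ :=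
  ∫ τ in t..b, max 0 (τ - c) • (C τ * (C τ)ᵀ)

theorem hasDerivWithinAt_delayedGramian (hC : Continuous C) (b c t : ℝ) (s : Set ℝ) :
    HasDerivWithinAt (delayedGramian C b c) (-(max 0 (t - c) • (C t * (C t)ᵀ))) s t := by
  have hcont : Continuous fun τ => max 0 (τ - c) • (C τ * (C τ)ᵀ) := by fun_prop
  have hsymm : delayedGramian C b c = fun t => -∫ τ in b..t, max 0 (τ - c) • (C τ * (C τ)ᵀ) :=
    funext fun t => intervalIntegral.integral_symm b t
  rw [hsymm]
  exact (hcont.integral_hasStrictDerivAt b t).hasDerivAt.fun_neg.hasDerivWithinAt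

theorem delayedGramian_self (C : ℝ → Matrix m q ℝ) (b c : ℝ) : delayedGramian C b c b = 0 :=
  intervalIntegral.integral_same

theorem delayedGramian_eq_of_le (hC : Continuous C) (hat : a ≤ t) (htc : t ≤ c) :
    delayedGramian C b c t = delayedGramian C b c a := by
  have hcont : Continuous fun τ => max 0 (τ - c) • (C τ * (C τ)ᵀ) := by fun_prop
  have hzero : ∫ τ in a..t, max 0 (τ - c) • (C τ * (C τ)ᵀ) = 0 := by
    refine (intervalIntegral.integral_congr fun τ hτ => ?_).trans intervalIntegral.integral_zero
    rw [uIcc_of_le hat] at hτ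
    simp only [max_eq_left (sub_nonpos.2 (hτ.2.trans htc)), zero_smul]
  rw [delayedGramian, delayedGramian, ← intervalIntegral.integral_add_adjacent_intervals
    (hcont.intervalIntegrable a t) (hcont.intervalIntegrable t b), hzero, zero_add]

theorem posDef_delayedGramian (hC : Continuous C)
    (hend : ∀ w, (∀ᶠ τ in 𝓝[<] b, w ᵥ* C τ = 0) → w = 0) (hcb : c < b) (htb : t < b) :
    (delayedGramian C b c t).PosDef := by
  have hcont : Continuous fun τ => max 0 (τ - c) • (C τ * (C τ)ᵀ) := by fun_prop
  refine posDef_integral htb hcont.continuousOn (fun τ _ => ?_) fun w hw => ?_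
  · rw [← conjTranspose_eq_transpose_of_trivial]
    exact (posSemidef_self_mul_conjTranspose (C τ)).smul (le_max_left _ _)
  · by_contra! hzero
    refine hw (hend w ?_)
    filter_upwards [Ioo_mem_nhdsLT (max_lt htb hcb)] with τ hτ
    have hform := hzero τ ⟨((le_max_left _ _).trans_lt hτ.1).le, hτ.2.le⟩
    rw [smul_mulVec, dotProduct_smul, ← mulVec_mulVec, dotProduct_mulVec, mulVec_transpose,
      smul_eq_mul] at hform
    have hweight : max 0 (τ - c) ≠ 0 :=
      (lt_max_of_lt_right (sub_pos.2 ((le_max_right _ _).trans_lt hτ.1))).ne'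
    exact dotProduct_self_eq_zero.1 ((mul_eq_zero_iff_left hweight).1 hform)

theorem exists_transfer_to_zero [DecidableEq m] (hC : Continuous C)
    (hend : ∀ w, (∀ᶠ τ in 𝓝[<] b, w ᵥ* C τ = 0) → w = 0) (hac : a ≤ c) (hcb : c < b) :
    ∃ (G : ℝ → Matrix m m ℝ) (J : ℝ → Matrix q m ℝ), Continuous J ∧
      (∀ t, HasDerivWithinAt G (C t * J t) (Icc a b) t) ∧ (∀ t ∈ Icc a c, G t = 1) ∧ G b = 0 ∧
      ∀ t < b, IsUnit (G t) := by
  have hunit : ∀ t < b, IsUnit (delayedGramian C b c t) := fun t ht =>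
    (posDef_delayedGramian hC hend hcb ht).isUnit
  have ha := hunit a (hac.trans_lt hcb)
  refine ⟨fun t => delayedGramian C b c t * (delayedGramian C b c a)⁻¹,
    fun t => -(max 0 (t - c) • ((C t)ᵀ * (delayedGramian C b c a)⁻¹)), by fun_prop,
    fun t => ?_, fun t ht => ?_, ?_, fun t ht => (hunit t ht).mul (isUnit_nonsing_inv_iff.2 ha)⟩
  · refine (hasDerivWithinAt_matrix_mul (hasDerivWithinAt_delayedGramian hC b c t _)
      (hasDerivWithinAt_const t _ _)).congr_deriv ?_
    simp [Matrix.mul_assoc]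
  · simp only [delayedGramian_eq_of_le hC ht.1 ht.2]
    exact mul_nonsing_inv _ ((isUnit_iff_isUnit_det _).1 ha)
  · simp only [delayedGramian_self, zero_mul]

theorem exists_posDef_sub_integral {M : ℝ → Matrix m m ℝ} (hM : Continuous M)
    (hherm : ∀ t ∈ Icc a b, (M t).IsHermitian) (hab : a < b) {S : Matrix m m ℝ}
    (hS : S.PosDef) : ∃ c ∈ Ico a b, (S - ∫ τ in c..b, M τ).PosDef := by
  have hcont : Continuous fun c => S - ∫ τ in c..b, M τ := by
    simp only [intervalIntegral.integral_symm b, sub_neg_eq_add]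
    exact continuous_const.add (intervalIntegral.continuous_primitive
      (fun _ _ => hM.intervalIntegrable _ _) b)
  have hev : ∀ᶠ c in 𝓝[<] b, (S - ∫ τ in c..b, M τ).IsHermitian →
      (S - ∫ τ in c..b, M τ).PosDef := by
    have htendsto := (hcont.tendsto b).mono_left (nhdsWithin_le_nhds (s := Iio b))
    rw [intervalIntegral.integral_same, sub_zero] at htendsto
    exact htendsto.eventually (eventually_posDef_of_isHermitian hS)
  obtain ⟨c, hposDef, hc⟩ := (hev.and (Ico_mem_nhdsLT hab)).exists
  refine ⟨c, hc, hposDef (hS.isHermitian.sub (isHermitian_integral hM.continuousOn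
    fun τ hτ => hherm τ ?_))⟩
  rw [uIcc_of_le hc.2.le] at hτ
  exact Icc_subset_Icc_left hc.1 hτ

theorem hasDerivWithinAt_mul_const_mul_transpose {H : ℝ → Matrix m m ℝ} {H' : Matrix m m ℝ}
    {s : Set ℝ} (hH : HasDerivWithinAt H H' s t) (D : Matrix m m ℝ) :
    HasDerivWithinAt (fun τ => H τ * D * (H τ)ᵀ) (H' * D * (H t)ᵀ + H t * D * H'ᵀ) s t := by
  refine (hasDerivWithinAt_matrix_mul (hasDerivWithinAt_matrix_mul hH
    (hasDerivWithinAt_const t _ D)) (hasDerivWithinAt_matrix_transpose hH)).congr_deriv ?_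
  rw [Matrix.mul_zero, add_zero]

theorem hasDerivWithinAt_congruence_interpolation [DecidableEq m] {G R : ℝ → Matrix m m ℝ}
    {J : Matrix q m ℝ} {P Q R' : Matrix m m ℝ} {s : Set ℝ} (hP : P.IsHermitian)
    (hQ : Q.IsHermitian) (hG : HasDerivWithinAt G (C t * J) s t)
    (hR : HasDerivWithinAt R R' s t) :
    HasDerivWithinAt (fun τ => G τ * P * (G τ)ᵀ + (1 - G τ) * Q * (1 - G τ)ᵀ + R τ)
      (C t * (J * (P * (G t)ᵀ - Q * (1 - G t)ᵀ)) +
        (C t * (J * (P * (G t)ᵀ - Q * (1 - G t)ᵀ)))ᵀ + R') s t := by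
  refine (((hasDerivWithinAt_mul_const_mul_transpose hG P).fun_add
    (hasDerivWithinAt_mul_const_mul_transpose (hG.const_sub 1) Q)).fun_add hR).congr_deriv ?_
  rw [IsHermitian, conjTranspose_eq_transpose_of_trivial] at hP hQ
  simp only [transpose_mul, transpose_sub, transpose_transpose, hP, hQ, transpose_neg,
    transpose_one, Matrix.mul_sub, Matrix.sub_mul, Matrix.neg_mul, Matrix.mul_neg, Matrix.mul_one,
    Matrix.one_mul, Matrix.mul_assoc]
  abel

theorem posDef_congruence_interpolation [DecidableEq m] {G P Q : Matrix m m ℝ}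
    (hG : IsUnit G ∨ IsUnit (1 - G)) (hP : P.PosDef) (hQ : Q.PosDef) :
    (G * P * Gᵀ + (1 - G) * Q * (1 - G)ᵀ).PosDef := by
  rcases hG with hG | hG
  · exact ((IsUnit.posDef_star_right_conjugate_iff hG).2 hP).add_posSemidef
      (hQ.posSemidef.mul_mul_conjTranspose_same _)
  · exact ((IsUnit.posDef_star_right_conjugate_iff hG).2 hQ).posSemidef_add
      (hP.posSemidef.mul_mul_conjTranspose_same _)

/-- The noise `M` accumulated up to a time `c` close to `b` is steered together with `S₀`; what it
adds afterwards is small enough to be subtracted from `S₁`. -/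
theorem exists_driftless_steering (hC : Continuous C)
    (hend : ∀ w, (∀ᶠ τ in 𝓝[<] b, w ᵥ* C τ = 0) → w = 0) {M : ℝ → Matrix m m ℝ}
    (hM : Continuous M) (hpsd : ∀ t ∈ Icc a b, (M t).PosSemidef) (hab : a < b)
    {S₀ S₁ : Matrix m m ℝ} (hS₀ : S₀.PosDef) (hS₁ : S₁.PosDef) :
    ∃ (U : ℝ → Matrix q m ℝ) (S : ℝ → Matrix m m ℝ), ContinuousOn U (Icc a b) ∧
      S a = S₀ ∧ S b = S₁ ∧ (∀ t ∈ Icc a b, (S t).PosDef) ∧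
      ∀ t ∈ Icc a b, HasDerivWithinAt S (C t * U t + (C t * U t)ᵀ + M t) (Icc a b) t := by
  classical
  obtain ⟨c, ⟨hac, hcb⟩, hQ⟩ :=
    exists_posDef_sub_integral hM (fun t ht => (hpsd t ht).isHermitian) hab hS₁
  set Q := S₁ - ∫ τ in c..b, M τ
  have hMint : ∀ {s t}, a ≤ s → s ≤ t → t ≤ b → (∫ τ in s..t, M τ).PosSemidef :=
    fun has hst htb => posSemidef_integral hst hM.continuousOn fun τ hτ =>
      hpsd τ ⟨has.trans hτ.1, hτ.2.trans htb⟩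
  set P := S₀ + ∫ τ in a..c, M τ
  have hP : P.PosDef := hS₀.add_posSemidef (hMint le_rfl hac hcb.le)
  obtain ⟨G, J, hJ, hG, hG1, hGb, hGunit⟩ := exists_transfer_to_zero hC hend hac hcb
  have hGcont : ContinuousOn G (Icc a b) := continuousOn_of_hasDerivWithinAt_matrix fun t _ => hG t
  have hSearly : ∀ t ∈ Icc a c, G t * P * (G t)ᵀ + (1 - G t) * Q * (1 - G t)ᵀ +
      ∫ τ in c..t, M τ = S₀ + ∫ τ in a..t, M τ := fun t ht => by
    rw [hG1 t ht, ← intervalIntegral.integral_add_adjacent_intervals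
      (hM.intervalIntegrable a c) (hM.intervalIntegrable c t)]
    simp [P, add_assoc]
  refine ⟨fun t => J t * (P * (G t)ᵀ - Q * (1 - G t)ᵀ),
    fun t => G t * P * (G t)ᵀ + (1 - G t) * Q * (1 - G t)ᵀ + ∫ τ in c..t, M τ, ?_, ?_, ?_,
    fun t ht => ?_, fun t _ => hasDerivWithinAt_congruence_interpolation hP.isHermitian
      hQ.isHermitian (hG t) (hM.integral_hasStrictDerivAt c t).hasDerivAt.hasDerivWithinAt⟩
  · have hfactor : Continuous fun X : Matrix m m ℝ => P * Xᵀ - Q * (1 - X)ᵀ := by fun_prop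
    exact continuousOn_matrix_mul hJ.continuousOn (hfactor.comp_continuousOn hGcont)
  · exact (hSearly a ⟨le_rfl, hac⟩).trans
      (by rw [intervalIntegral.integral_same, add_zero])
  · simp [hGb, Q]
  · dsimp only
    rcases le_or_gt t c with htc | hct
    · rw [hSearly t ⟨ht.1, htc⟩]
      exact hS₀.add_posSemidef (hMint le_rfl ht.1 ht.2)
    · have hGcases : IsUnit (G t) ∨ IsUnit (1 - G t) := ht.2.lt_or_eq.imp (hGunit t) fun htb => by
        rw [htb, hGb, sub_zero]
        exact isUnit_one
      exact (posDef_congruence_interpolation hGcases hP hQ).add_posSemidef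
        (hMint hac hct.le ht.2)

end Steering

section ControllableAtEnd

open scoped Matrix.Norms.Elementwise

variable {m q : Type*} [Fintype m] {F : ℝ → Matrix m m ℝ} {B : ℝ → Matrix m q ℝ} {a b : ℝ}

/-- Controllability of `x' = F x + B u` on every interval `[c, b]` with `a ≤ c < b`, in dual form:
an adjoint solution annihilating `B` just before time `b` is the zero solution. Since an adjoint
solution that vanishes once vanishes identically, it is enough to ask for one zero. -/
def ControllableAtEnd (F : ℝ → Matrix m m ℝ) (B : ℝ → Matrix m q ℝ) (a b : ℝ) : Prop :=
  ∀ x : ℝ → m → ℝ, (∀ t ∈ Icc a b, HasDerivWithinAt x (-(x t ᵥ* F t)) (Icc a b) t) →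
    (∀ᶠ t in 𝓝[<] b, x t ᵥ* B t = 0) → ∃ t ∈ Icc a b, x t = 0

theorem ControllableAtEnd.eq_zero_of_eventually_vecMul_eq_zero [DecidableEq m]
    (hctrl : ControllableAtEnd F B a b) {Y Z : ℝ → Matrix m m ℝ}
    (hZ : ∀ t ∈ Icc a b, HasDerivWithinAt Z (-(Z t * F t)) (Icc a b) t)
    (hZY : ∀ t ∈ Icc a b, Z t * Y t = 1) {w : m → ℝ}
    (hw : ∀ᶠ t in 𝓝[<] b, w ᵥ* (Z t * B t) = 0) : w = 0 := by
  obtain ⟨t, ht, hwt⟩ := hctrl (fun t => w ᵥ* Z t)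
    (fun t ht => (hasDerivWithinAt_vecMul (hasDerivWithinAt_const t _ w) (hZ t ht)).congr_deriv
      (by rw [zero_vecMul, zero_add, vecMul_neg, vecMul_vecMul]))
    (by simpa only [vecMul_vecMul] using hw)
  calc w = (w ᵥ* Z t) ᵥ* Y t := by rw [vecMul_vecMul, hZY t ht, vecMul_one]
    _ = 0 := by rw [hwt, zero_vecMul]

variable [Finite q] [DecidableEq m] {A : ℝ → Matrix m m ℝ} {ν : ℝ → ℝ}
  {Γ : ℕ → ℝ → Matrix m q ℝ} {x : ℝ → m → ℝ} {ℓ : ℕ}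

theorem hasDerivWithinAt_vecMul_of_adjoint {G : ℝ → Matrix m q ℝ} {G' : Matrix m q ℝ}
    {s : Set ℝ} {t : ℝ} (hx : HasDerivWithinAt x (-(x t ᵥ* (A t + ν t • 1))) s t)
    (hG : HasDerivWithinAt G (G' + A t * G t) s t) :
    HasDerivWithinAt (fun τ => x τ ᵥ* G τ) (x t ᵥ* G' - ν t • (x t ᵥ* G t)) s t := by
  have := Fintype.ofFinite q
  refine (hasDerivWithinAt_vecMul hx hG).congr_deriv ?_
  simp only [neg_vecMul, vecMul_add, add_vecMul, vecMul_smul, smul_vecMul, vecMul_one,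
    vecMul_vecMul]
  abel

theorem eventually_vecMul_eq_zero_of_adjoint (hab : a < b)
    (hΓ : ∀ k < ℓ, ∀ t ∈ Icc a b,
      HasDerivWithinAt (Γ k) (Γ (k + 1) t + A t * Γ k t) (Icc a b) t)
    (hx : ∀ t ∈ Icc a b, HasDerivWithinAt x (-(x t ᵥ* (A t + ν t • 1))) (Icc a b) t)
    (hx0 : ∀ᶠ t in 𝓝[<] b, x t ᵥ* Γ 0 t = 0) :
    ∀ k ≤ ℓ, ∀ᶠ t in 𝓝[<] b, x t ᵥ* Γ k t = 0 := by
  have := Fintype.ofFinite q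
  intro k
  induction k with
  | zero => exact fun _ => hx0
  | succ k ih =>
    intro hk
    have hderiv : ∀ᶠ t in 𝓝[<] b, HasDerivAt (fun τ => x τ ᵥ* Γ k τ)
        (x t ᵥ* Γ (k + 1) t - ν t • (x t ᵥ* Γ k t)) t := by
      filter_upwards [Ioo_mem_nhdsLT hab] with t ht
      have htIcc := Ioo_subset_Icc_self ht
      exact (hasDerivWithinAt_vecMul_of_adjoint (hx t htIcc) (hΓ k hk t htIcc)).hasDerivAt
        (Icc_mem_nhds ht.1 ht.2)
    have hk0 := ih (Nat.le_of_succ_le hk)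
    filter_upwards [hk0, eventually_eq_zero_of_hasDerivAt hk0 hderiv] with t htk ht
    rwa [htk, smul_zero, sub_zero] at ht

theorem controllableAtEnd_of_frequently (hab : a < b)
    (hΓ : ∀ k < ℓ, ∀ t ∈ Icc a b,
      HasDerivWithinAt (Γ k) (Γ (k + 1) t + A t * Γ k t) (Icc a b) t)
    (hspan : ∃ᶠ t in 𝓝[<] b, ∀ w, (∀ k ≤ ℓ, w ᵥ* Γ k t = 0) → w = 0) :
    ControllableAtEnd (fun t => A t + ν t • 1) (Γ 0) a b := by
  intro x hx hx0
  have hall : ∀ᶠ t in 𝓝[<] b, ∀ k ≤ ℓ, x t ᵥ* Γ k t = 0 :=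
    (finite_Iic ℓ).eventually_all.2 (eventually_vecMul_eq_zero_of_adjoint hab hΓ hx hx0)
  obtain ⟨t, hw, hxt, ht⟩ :=
    (hspan.and_eventually (hall.and (Ioo_mem_nhdsLT hab))).exists
  exact ⟨t, Ioo_subset_Icc_self ht, hw _ hxt⟩

end ControllableAtEnd

section LyapunovSteering

open scoped Matrix.Norms.Elementwise

variable {m q : Type*} [Fintype m]

theorem mul_conjugate_mul_transpose [DecidableEq m] {Y Z : Matrix m m ℝ} (hYZ : Y * Z = 1)
    (S : Matrix m m ℝ) : Y * (Z * S * Zᵀ) * Yᵀ = S :=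
  calc Y * (Z * S * Zᵀ) * Yᵀ = Y * Z * S * (Y * Z)ᵀ := by
        simp only [transpose_mul, Matrix.mul_assoc]
    _ = S := by rw [hYZ, transpose_one, Matrix.one_mul, Matrix.mul_one]

theorem posDef_mul_mul_transpose_of_mul_eq_one [DecidableEq m] {Y Z S : Matrix m m ℝ}
    (hYZ : Y * Z = 1) (hS : S.PosDef) : (Y * S * Yᵀ).PosDef :=
  (IsUnit.posDef_star_right_conjugate_iff (IsUnit.of_mul_eq_one _ hYZ)).2 hS

variable [Fintype q]

theorem mul_control_mul_transpose [DecidableEq m] {Y Z : Matrix m m ℝ} (hYZ : Y * Z = 1)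
    (N : Matrix m m ℝ) (B : Matrix m q ℝ) (U : Matrix q m ℝ) :
    Y * (Z * B * U + (Z * B * U)ᵀ + Z * N * Zᵀ) * Yᵀ = B * U * Yᵀ + (B * U * Yᵀ)ᵀ + N :=
  calc Y * (Z * B * U + (Z * B * U)ᵀ + Z * N * Zᵀ) * Yᵀ
      = Y * Z * B * U * Yᵀ + (Y * Z * B * U * Yᵀ)ᵀ + Y * (Z * N * Zᵀ) * Yᵀ := by
        simp only [transpose_mul, transpose_transpose, Matrix.mul_add, Matrix.add_mul,
          Matrix.mul_assoc]
    _ = B * U * Yᵀ + (B * U * Yᵀ)ᵀ + N := by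
        rw [mul_conjugate_mul_transpose hYZ, hYZ, Matrix.one_mul]

theorem feedback_mul_conjugate [DecidableEq m] {Y Z S : Matrix m m ℝ} (hZY : Z * Y = 1)
    (hS : IsUnit S) (B : Matrix m q ℝ) (U : Matrix q m ℝ) :
    B * (U * S⁻¹ * Z) * (Y * S * Yᵀ) = B * U * Yᵀ :=
  calc B * (U * S⁻¹ * Z) * (Y * S * Yᵀ) = B * U * (S⁻¹ * (Z * Y) * S) * Yᵀ := by
        simp only [Matrix.mul_assoc]
    _ = B * U * Yᵀ := by
        rw [hZY, Matrix.mul_one, nonsing_inv_mul _ ((isUnit_iff_isUnit_det _).1 hS),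
          Matrix.mul_one]

/-- The feedback `K = U S⁻¹ Z` realises the control `U` in the coordinates `Σ = Y S Yᵀ`, because
`B K Σ = B U Yᵀ`. -/
theorem hasDerivWithinAt_mul_mul_transpose_of_feedback [DecidableEq m] {Y S : ℝ → Matrix m m ℝ}
    {F Z N : Matrix m m ℝ} {B : Matrix m q ℝ} {U : Matrix q m ℝ} {s : Set ℝ} {t : ℝ}
    (hY : HasDerivWithinAt Y (F * Y t) s t) (hZY : Z * Y t = 1) (hpos : (S t).PosDef)
    (hS : HasDerivWithinAt S (Z * B * U + (Z * B * U)ᵀ + Z * N * Zᵀ) s t) :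
    HasDerivWithinAt (fun τ => Y τ * S τ * (Y τ)ᵀ)
      ((F + B * (U * (S t)⁻¹ * Z)) * (Y t * S t * (Y t)ᵀ) +
        Y t * S t * (Y t)ᵀ * (F + B * (U * (S t)⁻¹ * Z))ᵀ + N) s t := by
  have hBK := feedback_mul_conjugate hZY hpos.isUnit B U
  have hBKt : Y t * S t * (Y t)ᵀ * (B * (U * (S t)⁻¹ * Z))ᵀ = (B * U * (Y t)ᵀ)ᵀ := by
    have hsymm : (Y t * S t * (Y t)ᵀ)ᵀ = Y t * S t * (Y t)ᵀ :=
      hpos.posSemidef.mul_mul_conjTranspose_same (Y t) |>.isHermitian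
    rw [← hBK, transpose_mul _ (Y t * S t * (Y t)ᵀ), hsymm]
  refine (hasDerivWithinAt_matrix_mul (hasDerivWithinAt_matrix_mul hY hS)
    (hasDerivWithinAt_matrix_transpose hY)).congr_deriv ?_
  rw [Matrix.add_mul, mul_control_mul_transpose (mul_eq_one_comm.1 hZY), Matrix.add_mul F,
    transpose_add F, Matrix.mul_add, hBK, hBKt]
  simp only [transpose_mul, Matrix.mul_assoc]
  abel

theorem exists_lyapunov_steering {F N : ℝ → Matrix m m ℝ} {B : ℝ → Matrix m q ℝ} {a b : ℝ}
    (hab : a < b) (hF : ContinuousOn F (Icc a b)) (hB : ContinuousOn B (Icc a b))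
    (hN : ContinuousOn N (Icc a b)) (hctrl : ControllableAtEnd F B a b)
    (hpsd : ∀ t ∈ Icc a b, (N t).PosSemidef) {S₀ S₁ : Matrix m m ℝ} (hS₀ : S₀.PosDef)
    (hS₁ : S₁.PosDef) :
    ∃ K : ℝ → Matrix q m ℝ, ContinuousOn K (Icc a b) ∧ ∃ S : ℝ → Matrix m m ℝ,
      S a = S₀ ∧ S b = S₁ ∧ (∀ t ∈ Icc a b, (S t).PosDef) ∧
      ∀ t ∈ Icc a b, HasDerivWithinAt S
        ((F t + B t * K t) * S t + S t * (F t + B t * K t)ᵀ + N t) (Icc a b) t := by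
  classical
  obtain ⟨Y, Z, hY, hZ, hZY⟩ := exists_matrix_fundamental_solution hab.le hF
  have hYZ : ∀ t ∈ Icc a b, Y t * Z t = 1 := fun t ht => mul_eq_one_comm.1 (hZY t ht)
  have hZc : ContinuousOn Z (Icc a b) := continuousOn_of_hasDerivWithinAt_matrix hZ
  obtain ⟨C, hC, hCeq⟩ := exists_continuous_eqOn_Icc hab.le (continuousOn_matrix_mul hZc hB)
  obtain ⟨M, hM, hMeq⟩ := exists_continuous_eqOn_Icc hab.le (continuousOn_matrix_mul
    (continuousOn_matrix_mul hZc hN) (continuousOn_matrix_transpose hZc))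
  have hend : ∀ w, (∀ᶠ t in 𝓝[<] b, w ᵥ* C t = 0) → w = 0 := fun w hw => by
    refine hctrl.eq_zero_of_eventually_vecMul_eq_zero hZ hZY ?_
    filter_upwards [hw, Ioo_mem_nhdsLT hab] with t hwt ht
    rwa [hCeq (Ioo_subset_Icc_self ht)] at hwt
  have hMpsd : ∀ t ∈ Icc a b, (M t).PosSemidef := fun t ht => by
    rw [hMeq ht]
    exact (hpsd t ht).mul_mul_conjTranspose_same (Z t)
  have ha := left_mem_Icc.2 hab.le
  have hb := right_mem_Icc.2 hab.le
  obtain ⟨U, S, hU, hSa, hSb, hSpos, hS⟩ := exists_driftless_steering hC hend hM hMpsd hab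
    (posDef_mul_mul_transpose_of_mul_eq_one (hZY a ha) hS₀)
    (posDef_mul_mul_transpose_of_mul_eq_one (hZY b hb) hS₁)
  have hSc : ContinuousOn S (Icc a b) := continuousOn_of_hasDerivWithinAt_matrix hS
  refine ⟨fun t => U t * (S t)⁻¹ * Z t, continuousOn_matrix_mul (continuousOn_matrix_mul hU
    (continuousOn_matrix_inv hSc fun t ht => (hSpos t ht).isUnit)) hZc,
    fun t => Y t * S t * (Y t)ᵀ, ?_, ?_,
    fun t ht => posDef_mul_mul_transpose_of_mul_eq_one (hYZ t ht) (hSpos t ht), fun t ht => ?_⟩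
  · simp only [hSa, mul_conjugate_mul_transpose (hYZ a ha)]
  · simp only [hSb, mul_conjugate_mul_transpose (hYZ b hb)]
  · refine hasDerivWithinAt_mul_mul_transpose_of_feedback (hY t ht) (hZY t ht) (hSpos t ht) ?_
    simpa only [hCeq ht, hMeq ht] using hS t ht

end LyapunovSteering

theorem eq_zero_of_vecMul_eq_zero_of_rank {n : ℕ} {ι : Type*} [Fintype ι]
    {T : Matrix (Fin n) ι ℝ} (hT : T.rank = n) {w : Fin n → ℝ} (hw : w ᵥ* T = 0) : w = 0 := by
  have hrows : LinearIndependent ℝ T.row := by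
    rw [linearIndependent_iff_card_eq_finrank_span, Fintype.card_fin]
    exact hT.symm.trans T.rank_eq_finrank_span_row
  exact vecMul_injective_iff.2 hrows (hw.trans (zero_vecMul T).symm)

theorem eq_zero_of_rank_thetaMat {n p i : ℕ} {Γ : ℕ → ℝ → Matrix (Fin n) (Fin p) ℝ} {t : ℝ}
    (hrank : (thetaMat Γ i t).rank = n) {w : Fin n → ℝ} (hw : ∀ k < i, w ᵥ* Γ k t = 0) : w = 0 :=
  eq_zero_of_vecMul_eq_zero_of_rank hrank
    (funext fun kj : Fin i × Fin p => congrFun (hw kj.1 kj.1.2) kj.2)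

/-- Absorbing `ν` into the drift `A + ν` leaves a Lyapunov equation without the scalar term. -/
theorem stmt_19_general {m q : Type*} [Fintype m] [Fintype q] {a b : ℝ} (hab : a < b)
    {A : ℝ → Matrix m m ℝ} {B : ℝ → Matrix m q ℝ} (hA : ContinuousOn A (Icc a b))
    (hB : ContinuousOn B (Icc a b)) {Γ : ℕ → ℝ → Matrix m q ℝ} {ℓ : ℕ} (hΓ0 : Γ 0 = B)
    (hΓ : ∀ k < ℓ, ∀ t ∈ Icc a b,
      HasDerivWithinAt (Γ k) (Γ (k + 1) t + A t * Γ k t) (Icc a b) t)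
    (hspan : ∃ᶠ t in 𝓝[<] b, ∀ w, (∀ k ≤ ℓ, w ᵥ* Γ k t = 0) → w = 0)
    {N : ℝ → Matrix m m ℝ} {ν : ℝ → ℝ} (hN : ContinuousOn N (Icc a b))
    (hν : ContinuousOn ν (Icc a b)) (hpsd : ∀ t ∈ Icc a b, (N t).PosSemidef)
    {S₀ S₁ : Matrix m m ℝ} (hS₀ : S₀.PosDef) (hS₁ : S₁.PosDef) :
    ∃ K : ℝ → Matrix q m ℝ, ContinuousOn K (Icc a b) ∧ ∃ S : ℝ → Matrix m m ℝ,
      S a = S₀ ∧ S b = S₁ ∧ (∀ t ∈ Icc a b, (S t).PosDef) ∧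
      ∀ t ∈ Icc a b, HasDerivWithinAt S ((A t + B t * K t) * S t + S t * (A t + B t * K t)ᵀ +
        N t + (2 * ν t) • S t) (Icc a b) t := by
  classical
  subst hΓ0
  obtain ⟨K, hK, S, hSa, hSb, hSpos, hS⟩ := exists_lyapunov_steering hab
    (hA.fun_add (hν.fun_smul continuousOn_const)) hB hN
    (controllableAtEnd_of_frequently hab hΓ hspan) hpsd hS₀ hS₁
  refine ⟨K, hK, S, hSa, hSb, hSpos, fun t ht => ?_⟩
  convert hS t ht using 1
  simp only [transpose_add, transpose_smul, transpose_one, Matrix.add_mul, Matrix.mul_add,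
    Matrix.smul_mul, Matrix.mul_smul, Matrix.one_mul, Matrix.mul_one, two_mul, add_smul]
  abel

theorem stmt_19 {n p : ℕ} (hn : 1 ≤ n) (hp : 1 ≤ p)
    (A : ℝ → Matrix (Fin n) (Fin n) ℝ) (B : ℝ → Matrix (Fin n) (Fin p) ℝ)
    (hAsm : ∀ i j, ContDiffOn ℝ (n - 1 : ℕ) (fun t => A t i j) (Set.Icc 0 1))
    (hBsm : ∀ i j, ContDiffOn ℝ (n : ℕ) (fun t => B t i j) (Set.Icc 0 1))
    (Γ : ℕ → ℝ → Matrix (Fin n) (Fin p) ℝ)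
    (hΓ0 : Γ 0 = B)
    (hΓ : ∀ k < n, ∀ t ∈ Set.Icc (0:ℝ) 1, ∀ (i : Fin n) (j : Fin p),
      HasDerivWithinAt (fun τ : ℝ => Γ k τ i j) ((Γ (k + 1) t + A t * Γ k t) i j)
        (Set.Icc (0:ℝ) 1) t)
    -- uniform controllability on [0,1]
    (hUC : ∀ t ∈ Set.Icc (0:ℝ) 1, (thetaMat Γ n t).rank = n)
    -- index invariance on [0,1]
    (hII₁ : ∀ i, 1 ≤ i → i ≤ n + 1 → ∃ r : ℕ, ∀ t ∈ Set.Icc (0:ℝ) 1,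
      (thetaMat Γ i t).rank = r)
    (hII₂ : ∀ t ∈ Set.Icc (0:ℝ) 1, (thetaMat Γ n t).rank = (thetaMat Γ (n + 1) t).rank)
    (N : ℝ → Matrix (Fin n) (Fin n) ℝ) (ν : ℝ → ℝ)
    (hN : ∀ i j, ContDiffOn ℝ (max (n - 2) 0 : ℕ) (fun t => N t i j) (Set.Icc 0 1))
    (hν : ContDiffOn ℝ (max (n - 2) 0 : ℕ) ν (Set.Icc 0 1))
    (hNpsd : ∀ t ∈ Set.Icc (0:ℝ) 1, (N t).PosSemidef)
    (hνpos : ∀ t ∈ Set.Icc (0:ℝ) 1, 0 ≤ ν t)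
    (Sig0 Sig1 : Matrix (Fin n) (Fin n) ℝ) (hSig0 : Sig0.PosDef) (hSig1 : Sig1.PosDef) :
    ∃ (K : ℝ → Matrix (Fin p) (Fin n) ℝ) (E : Finset ℝ),
      -- `K` is bounded on `[0,1]`
      (∃ c : ℝ, ∀ t ∈ Set.Icc (0:ℝ) 1, ∀ i j, |K t i j| ≤ c) ∧
      -- `K` is piecewise continuous: continuous off the finite set `E`
      ContinuousOn K (Set.Icc (0:ℝ) 1 \ ↑E) ∧
      ∃ S : ℝ → Matrix (Fin n) (Fin n) ℝ,
        ContinuousOn S (Set.Icc (0:ℝ) 1) ∧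
        S 0 = Sig0 ∧ S 1 = Sig1 ∧
        (∀ t ∈ Set.Icc (0:ℝ) 1, (S t).PosDef) ∧
        ∀ t ∈ Set.Icc (0:ℝ) 1 \ ↑E, ∀ (i j : Fin n),
          HasDerivWithinAt (fun τ : ℝ => S τ i j)
            (((A t + B t * K t) * S t + S t * (A t + B t * K t)ᵀ +
              N t + (2 * ν t) • S t) i j)
            (Set.Icc (0:ℝ) 1) t := by
  obtain ⟨K, hK, S, hS0, hS1, hSpos, hS⟩ := stmt_19_general zero_lt_one
    (continuousOn_matrix_of_contDiffOn hAsm) (continuousOn_matrix_of_contDiffOn hBsm) hΓ0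
    (fun k hk t ht => hasDerivWithinAt_matrix.2 (hΓ k hk t ht))
    (eventually_of_mem (Icc_mem_nhdsLT zero_lt_one) fun t ht w hw =>
      eq_zero_of_rank_thetaMat (hUC t ht) fun k hk => hw k hk.le).frequently
    (continuousOn_matrix_of_contDiffOn hN) hν.continuousOn hNpsd hSig0 hSig1
  exact ⟨K, ∅, exists_abs_entry_le_of_continuousOn isCompact_Icc hK, hK.mono sdiff_subset, S,
    continuousOn_of_hasDerivWithinAt_matrix hS, hS0, hS1, hSpos,
    fun t ht => hasDerivWithinAt_matrix.1 (hS t ht.1)⟩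
end
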